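/- arXiv:2302.07194 — 8 statements merged into one kernel-verified Lean document; each statement's English description precedes it below -/
import Mathlib

section
/- Let d < D, let A ∈ ℝ^{D×d} have orthonormal columns, and let p_z be a positive, twice continuously differentiable probability density on ℝ^d with sub-Gaussian tails (there are B, C₁, C₂ > 0 with p_z(z) ≤ (2π)^{−d/2} C₁ exp(−C₂‖z‖₂²/2) whenever ‖z‖₂ ≥ B). For every t > 0 and x ∈ ℝ^D, the score of the noised distribution decomposes as ∇_x log p_t(x) = A ∇ log p_t^{LD}(Aᵀx) − (1/h(t)) (I_D − AAᵀ) x. -/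
/-!
Write `M = Aᵀ`, `h = h(t)` and `u = α(t) z`. Since `A` has orthonormal columns,
`‖y - A u‖² = (‖y‖² - ‖M y‖²) + ‖M y - u‖²` (`norm_sub_sq_split`), so the first summand leaves the
integral over `z` and
`p_t(y) = c · exp (-(‖y‖² - ‖M y‖²) / (2h)) · p_t^{LD}(M y)` with a constant `c > 0`.
Taking logarithms and differentiating gives the claim, because `y ↦ ‖y‖² - ‖M y‖²` has gradient
`2 (y - A Aᵀ y)` and the chain rule turns `∇ log p_t^{LD}` into `A ∇ log p_t^{LD}(M y)`.

The analytic input is that `p_t^{LD}` is positive and differentiable. Differentiation under the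
integral sign is justified in `differentiable_smoothing`: the gradient of the Gaussian kernel is
bounded uniformly in both variables, so a multiple of the integrable density `p_z` dominates.
-/

open MeasureTheory Real Matrix

/-- `h(t) = 1 - e^{-t}`. -/
noncomputable def hfun (t : ℝ) : ℝ := 1 - Real.exp (-t)

/-- `α(t) = e^{-t/2}`. -/
noncomputable def afun (t : ℝ) : ℝ := Real.exp (-t / 2)

section Smoothing

variable {d : ℕ}

/-- For `s = ‖w‖` the left side is `h` times the norm of the gradient of the Gaussian
`exp (-‖w‖² / (2h))`, which is therefore bounded. The constant comes
from `s ≤ 1 + s² ≤ (1 + 2h) (1 + s² / (2h))` and `1 + r ≤ exp r`. -/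
lemma mul_exp_neg_sq_le {h : ℝ} (hh : 0 < h) (s : ℝ) :
    s * Real.exp (-s ^ 2 / (2 * h)) ≤ 1 + 2 * h := by
  have h1 : s ^ 2 / (2 * h) + 1 ≤ Real.exp (s ^ 2 / (2 * h)) := Real.add_one_le_exp _
  have h2 : s ≤ (1 + 2 * h) * (s ^ 2 / (2 * h) + 1) := by
    have h3 : (1 + 2 * h) * (s ^ 2 / (2 * h) + 1) = s ^ 2 / (2 * h) + s ^ 2 + 1 + 2 * h := by
      field_simp
      ring
    have h4 : 0 ≤ s ^ 2 / (2 * h) := by positivity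
    rw [h3]
    nlinarith [sq_nonneg (s - 1), sq_nonneg s]
  rw [neg_div, Real.exp_neg, ← div_eq_mul_inv, div_le_iff₀ (Real.exp_pos _)]
  exact h2.trans (mul_le_mul_of_nonneg_left h1 (by positivity))

lemma integrable_smoothing {h : ℝ} (hh : 0 < h) (a : ℝ)
    {p : EuclideanSpace ℝ (Fin d) → ℝ} (hp : Integrable p) (hc : Continuous p)
    (w : EuclideanSpace ℝ (Fin d)) :
    Integrable (fun z => Real.exp (-‖w - a • z‖ ^ 2 / (2 * h)) * p z) := by
  refine hp.norm.mono' (by fun_prop) (Filter.Eventually.of_forall fun z => ?_)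
  rw [norm_mul, Real.norm_eq_abs, Real.abs_exp]
  refine mul_le_of_le_one_left (norm_nonneg _) (Real.exp_le_one_iff.mpr ?_)
  rw [neg_div, neg_nonpos]
  positivity

lemma differentiable_smoothing {h : ℝ} (hh : 0 < h) (a : ℝ)
    {p : EuclideanSpace ℝ (Fin d) → ℝ} (hp : Integrable p) (hc : Continuous p) :
    Differentiable ℝ fun w => ∫ z, Real.exp (-‖w - a • z‖ ^ 2 / (2 * h)) * p z := by
  intro w₀
  let F' : EuclideanSpace ℝ (Fin d) → EuclideanSpace ℝ (Fin d) →
      (EuclideanSpace ℝ (Fin d) →L[ℝ] ℝ) := fun w z =>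
    (-(1 / h) * Real.exp (-‖w - a • z‖ ^ 2 / (2 * h)) * p z) • innerSL ℝ (w - a • z)
  refine (hasFDerivAt_integral_of_dominated_of_fderiv_le (F' := F') (s := Set.univ)
    (bound := fun z => (1 / h * (1 + 2 * h)) * ‖p z‖) Filter.univ_mem
    (Filter.Eventually.of_forall fun w => (integrable_smoothing hh a hp hc w).1)
    (integrable_smoothing hh a hp hc w₀) ?_ ?_ (hp.norm.const_mul _) ?_).differentiableAt
  · exact Continuous.aestronglyMeasurable (by fun_prop)
  · refine Filter.Eventually.of_forall fun z w _ => ?_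
    simp only [F']
    rw [norm_smul, innerSL_apply_norm, norm_mul, norm_mul, norm_neg, Real.norm_eq_abs (1 / h),
      abs_of_pos (by positivity : 0 < 1 / h), Real.norm_eq_abs (Real.exp _), Real.abs_exp]
    have := mul_exp_neg_sq_le hh ‖w - a • z‖
    calc 1 / h * Real.exp (-‖w - a • z‖ ^ 2 / (2 * h)) * ‖p z‖ * ‖w - a • z‖
        = 1 / h * (‖w - a • z‖ * Real.exp (-‖w - a • z‖ ^ 2 / (2 * h))) * ‖p z‖ := by ring
      _ ≤ _ := by gcongr
  · refine Filter.Eventually.of_forall fun z w _ => ?_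
    have h1 : HasFDerivAt (fun w => ‖w - a • z‖ ^ 2) (2 • innerSL ℝ (w - a • z)) w := by
      simpa using ((hasFDerivAt_id w).sub_const (a • z)).norm_sq
    have h2 := (((h1.neg.mul_const (2 * h)⁻¹).exp).mul_const (p z))
    simp only [← div_eq_mul_inv] at h2
    refine h2.congr_fderiv ?_
    ext v
    simp [F']
    field_simp

lemma smoothing_pos {h : ℝ} (hh : 0 < h) (a : ℝ)
    {p : EuclideanSpace ℝ (Fin d) → ℝ} (hp : Integrable p) (hc : Continuous p)
    (hpos : ∀ z, 0 < p z) (w : EuclideanSpace ℝ (Fin d)) :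
    0 < ∫ z, Real.exp (-‖w - a • z‖ ^ 2 / (2 * h)) * p z :=
  integral_pos_of_integrable_nonneg_nonzero (x := 0) (by fun_prop)
    (integrable_smoothing hh a hp hc w)
    (fun z => (mul_pos (Real.exp_pos _) (hpos z)).le)
    (mul_pos (Real.exp_pos _) (hpos 0)).ne'

end Smoothing

lemma inner_toEuclideanLin_left {d D : ℕ} (A : Matrix (Fin D) (Fin d) ℝ)
    (u : EuclideanSpace ℝ (Fin d)) (y : EuclideanSpace ℝ (Fin D)) :
    inner ℝ (Matrix.toEuclideanLin A u) y = inner ℝ u (Matrix.toEuclideanLin Aᵀ y) := by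
  rw [← Matrix.conjTranspose_eq_transpose_of_trivial A, Matrix.toEuclideanLin_conjTranspose_eq_adjoint,
    LinearMap.adjoint_inner_right]

lemma toEuclideanLin_transpose_apply {d D : ℕ} {A : Matrix (Fin D) (Fin d) ℝ} (hA : Aᵀ * A = 1)
    (u : EuclideanSpace ℝ (Fin d)) :
    Matrix.toEuclideanLin Aᵀ (Matrix.toEuclideanLin A u) = u := by
  simp [Matrix.toLpLin_apply, Matrix.mulVec_mulVec, hA]

/-- Pythagoras for the column space of `A`: the component of `y` orthogonal to it contributes
`‖y‖² - ‖Aᵀ y‖²`, independently of `u`. -/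
lemma norm_sub_sq_split {d D : ℕ} {A : Matrix (Fin D) (Fin d) ℝ} (hA : Aᵀ * A = 1)
    (u : EuclideanSpace ℝ (Fin d)) (y : EuclideanSpace ℝ (Fin D)) :
    ‖y - Matrix.toEuclideanLin A u‖ ^ 2 =
      (‖y‖ ^ 2 - ‖Matrix.toEuclideanLin Aᵀ y‖ ^ 2) + ‖Matrix.toEuclideanLin Aᵀ y - u‖ ^ 2 := by
  have h1 : ‖Matrix.toEuclideanLin A u‖ ^ 2 = ‖u‖ ^ 2 := by
    rw [← real_inner_self_eq_norm_sq, inner_toEuclideanLin_left,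
      toEuclideanLin_transpose_apply hA, real_inner_self_eq_norm_sq]
  rw [norm_sub_sq_real, norm_sub_sq_real, h1, real_inner_comm, inner_toEuclideanLin_left,
    real_inner_comm]
  ring

/-- Lemma: score decomposition for linear subspace data.
If data is `x = A z` with `A` having orthonormal columns and latent density `p_z`
positive, `C²`, and sub-Gaussian, then for every `t > 0` the score of the noised
density decomposes as
`∇ log p_t(x) = A ∇ log p_t^{LD}(Aᵀ x) - (1/h(t)) (I_D - A Aᵀ) x`. -/
theorem score_decomposition
    (d D : ℕ) (hdD : d < D)
    (A : Matrix (Fin D) (Fin d) ℝ) (hA : Aᵀ * A = 1)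
    (pz : EuclideanSpace ℝ (Fin d) → ℝ)
    (hpz_pos : ∀ z, 0 < pz z)
    (hpz_smooth : ContDiff ℝ 2 pz)
    (hpz_prob : ∫ z, pz z = 1)
    (B C₁ C₂ : ℝ) (hB : 0 < B) (hC₁ : 0 < C₁) (hC₂ : 0 < C₂)
    (hpz_tail : ∀ z : EuclideanSpace ℝ (Fin d), B ≤ ‖z‖ →
      pz z ≤ (2 * π) ^ (-(d : ℝ) / 2) * C₁ * Real.exp (-C₂ * ‖z‖ ^ 2 / 2))
    (pt : ℝ → EuclideanSpace ℝ (Fin D) → ℝ)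
    (hpt : ∀ t x, pt t x =
      ∫ z : EuclideanSpace ℝ (Fin d),
        (2 * π * hfun t) ^ (-(D : ℝ) / 2) *
          Real.exp (-‖x - Matrix.toEuclideanLin A (afun t • z)‖ ^ 2 / (2 * hfun t)) * pz z)
    (ptLD : ℝ → EuclideanSpace ℝ (Fin d) → ℝ)
    (hptLD : ∀ t z', ptLD t z' =
      ∫ z : EuclideanSpace ℝ (Fin d),
        (2 * π * hfun t) ^ (-(d : ℝ) / 2) *
          Real.exp (-‖z' - afun t • z‖ ^ 2 / (2 * hfun t)) * pz z)
    (t : ℝ) (ht : 0 < t) (x : EuclideanSpace ℝ (Fin D)) :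
    gradient (fun y => Real.log (pt t y)) x =
      Matrix.toEuclideanLin A
          (gradient (fun z' => Real.log (ptLD t z')) (Matrix.toEuclideanLin Aᵀ x))
        - (1 / hfun t) • (x - Matrix.toEuclideanLin A (Matrix.toEuclideanLin Aᵀ x)) := by
  have hh : 0 < hfun t := by
    have : Real.exp (-t) < 1 := Real.exp_lt_one_iff.mpr (by linarith)
    unfold hfun
    linarith
  have hc : Continuous pz := hpz_smooth.continuous
  -- A non-integrable `pz` would have Bochner integral `0`, not `1`.
  have hp : Integrable pz := by
    by_contra hn
    rw [integral_undef hn] at hpz_prob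
    exact zero_ne_one hpz_prob
  set h := hfun t with hh_def
  have hbase : 0 < 2 * π * h := by positivity
  set q : EuclideanSpace ℝ (Fin d) → ℝ := fun w =>
    ∫ z, Real.exp (-‖w - afun t • z‖ ^ 2 / (2 * h)) * pz z with hq
  have hLD : ∀ w, ptLD t w = (2 * π * h) ^ (-(d : ℝ) / 2) * q w := by
    intro w
    rw [hptLD, hq, ← integral_const_mul]
    simp only [mul_assoc, hh_def]
  have hLD_pos : ∀ w, 0 < ptLD t w := fun w => by
    rw [hLD]
    exact mul_pos (Real.rpow_pos_of_pos hbase _) (smoothing_pos hh _ hp hc hpz_pos w)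
  have hLD_diff : Differentiable ℝ (ptLD t) := by
    rw [funext hLD]
    exact (differentiable_smoothing hh _ hp hc).const_mul _
  set c : ℝ := (2 * π * h) ^ (-(D : ℝ) / 2) / (2 * π * h) ^ (-(d : ℝ) / 2) with hc_def
  have hc_pos : 0 < c := div_pos (Real.rpow_pos_of_pos hbase _) (Real.rpow_pos_of_pos hbase _)
  have hfac : ∀ y, pt t y = c * Real.exp (-(‖y‖ ^ 2 - ‖Matrix.toEuclideanLin Aᵀ y‖ ^ 2) / (2 * h)) *
      ptLD t (Matrix.toEuclideanLin Aᵀ y) := by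
    intro y
    have hne := (Real.rpow_pos_of_pos hbase (-(d : ℝ) / 2)).ne'
    rw [hpt, hptLD, ← integral_const_mul]
    refine integral_congr_ae (Filter.Eventually.of_forall fun z => ?_)
    simp only [← hh_def]
    rw [norm_sub_sq_split hA, neg_add, add_div, Real.exp_add, hc_def]
    field_simp
  have hlog : ∀ y, Real.log (pt t y) = Real.log c -
      (‖y‖ ^ 2 - ‖Matrix.toEuclideanLin Aᵀ y‖ ^ 2) * (2 * h)⁻¹ +
      Real.log (ptLD t (Matrix.toEuclideanLin Aᵀ y)) := by
    intro y
    rw [hfac, Real.log_mul (mul_pos hc_pos (Real.exp_pos _)).ne' (hLD_pos _).ne',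
      Real.log_mul hc_pos.ne' (Real.exp_pos _).ne', Real.log_exp]
    ring
  simp only [hlog]
  set M : EuclideanSpace ℝ (Fin D) →L[ℝ] EuclideanSpace ℝ (Fin d) :=
    (Matrix.toEuclideanLin Aᵀ).toContinuousLinearMap with hM
  have hMa : ∀ y, Matrix.toEuclideanLin Aᵀ y = M y := fun y => rfl
  simp only [hMa]
  have hG : HasGradientAt (fun z' => Real.log (ptLD t z'))
      (gradient (fun z' => Real.log (ptLD t z')) (M x)) (M x) :=
    ((hLD_diff _).log (hLD_pos _).ne').hasGradientAt
  set G := gradient (fun z' => Real.log (ptLD t z')) (M x)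
  have h1 := hG.hasFDerivAt.comp x M.hasFDerivAt
  have h2 := ((hasFDerivAt_id (𝕜 := ℝ) x).norm_sq.sub M.hasFDerivAt.norm_sq).mul_const (2 * h)⁻¹
  have h3 := ((hasFDerivAt_const (𝕜 := ℝ) (Real.log c) x).sub h2).add h1
  refine HasGradientAt.gradient ?_
  rw [hasGradientAt_iff_hasFDerivAt]
  refine HasFDerivAt.congr_fderiv h3 ?_
  ext v
  simp [inner_toEuclideanLin_left, hMa]
  field_simp
  ring
end

section
/- Let d < D, let A ∈ ℝ^{D×d} have orthonormal columns, and let p_z be the density of the Gaussian N(0, Σ) on ℝ^d with Σ = diag(λ₁², …, λ_d²), where all λ_k > 0. Then for every t > 0 and x ∈ ℝ^D, ∇_x log p_t(x) = −A Σ_t^{−1} Aᵀ x − (1/h(t)) (I_D − AAᵀ) x, where Σ_t = diag(α²(t)λ₁² + h(t), …, α²(t)λ_d² + h(t)). -/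
/-!
Because `Aᵀ A = 1`, `‖x - α A z‖² = ‖x‖² + ∑ (α² z_k² - 2 α (Aᵀ x)_k z_k)`
(`norm_sub_toEuclideanLin_sq`). Completing the square in each `z_k` and using translation invariance
of Lebesgue measure gives `p_t(x) = C · exp (Q x)` with
`Q x = -‖x‖² / (2h) + ∑ (1/h - 1/(α² λ_k² + h)) (Aᵀ x)_k² / 2` (`integral_gaussian_mixture`).
The value of `C` is irrelevant, but `C > 0` is needed to take logarithms; it follows from the
integrability of the Gaussian weight (`integrable_exp_neg_sum_mul_sq`). Hence `log p_t` is
`log C + Q`, whose gradient is computed in `hasGradientAt_quadratic`.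
-/

open MeasureTheory Real Matrix

lemma toEuclideanLin_inner_transpose {m n : ℕ} (A : Matrix (Fin m) (Fin n) ℝ)
    (u : EuclideanSpace ℝ (Fin n)) (v : EuclideanSpace ℝ (Fin m)) :
    inner ℝ (Matrix.toEuclideanLin A u) v = inner ℝ u (Matrix.toEuclideanLin Aᵀ v) := by
  have h := Matrix.toEuclideanLin_conjTranspose_eq_adjoint A
  rw [Matrix.conjTranspose_eq_transpose_of_trivial] at h
  rw [h, LinearMap.adjoint_inner_right]

/-- The Gaussian weight factors over the coordinates, so Fubini reduces this to dimension one. -/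
lemma integrable_exp_neg_sum_mul_sq {d : ℕ} (c : Fin d → ℝ) (hc : ∀ k, 0 < c k) :
    Integrable (fun z : EuclideanSpace ℝ (Fin d) => Real.exp (∑ k, -c k * z k ^ 2)) := by
  have h := Integrable.fintype_prod (μ := fun _ : Fin d => (volume : Measure ℝ))
    (fun k => integrable_exp_neg_mul_sq (hc k))
  simp_rw [← Real.exp_sum] at h
  exact (PiLp.volume_preserving_ofLp (Fin d)).integrable_comp_of_integrable h

/-- Since `A` is an isometry, the squared distance from `x` to `A u` separates over the coordinates
of `u`, with `x` entering the cross terms only through `Aᵀ x`. -/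
lemma norm_sub_toEuclideanLin_sq {d D : ℕ} (A : Matrix (Fin D) (Fin d) ℝ) (hA : Aᵀ * A = 1)
    (x : EuclideanSpace ℝ (Fin D)) (u : EuclideanSpace ℝ (Fin d)) :
    ‖x - Matrix.toEuclideanLin A u‖ ^ 2
      = ‖x‖ ^ 2 + ∑ k, (u k ^ 2 - 2 * (Matrix.toEuclideanLin Aᵀ x k * u k)) := by
  have hAu : Matrix.toEuclideanLin Aᵀ (Matrix.toEuclideanLin A u) = u := by
    ext i
    simp [Matrix.toLpLin_apply, Matrix.mulVec_mulVec, hA]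
  rw [norm_sub_sq_real, real_inner_comm, toEuclideanLin_inner_transpose,
    ← real_inner_self_eq_norm_sq (Matrix.toEuclideanLin A u), toEuclideanLin_inner_transpose, hAu,
    real_inner_self_eq_norm_sq, EuclideanSpace.real_norm_sq_eq u, PiLp.inner_apply,
    Finset.sum_sub_distrib, ← Finset.mul_sum]
  simp
  ring

lemma inner_toEuclideanLin_mul_diagonal {d D : ℕ} (A : Matrix (Fin D) (Fin d) ℝ) (s : Fin d → ℝ)
    (x v : EuclideanSpace ℝ (Fin D)) :
    inner ℝ (Matrix.toEuclideanLin (A * Matrix.diagonal s * Aᵀ) x) v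
      = ∑ k, s k * (Matrix.toEuclideanLin Aᵀ x k * Matrix.toEuclideanLin Aᵀ v k) := by
  have h : Matrix.toEuclideanLin (A * Matrix.diagonal s * Aᵀ) x
      = Matrix.toEuclideanLin A (Matrix.toEuclideanLin (Matrix.diagonal s)
          (Matrix.toEuclideanLin Aᵀ x)) := by
    ext i
    simp [Matrix.toLpLin_apply, Matrix.mulVec_mulVec, Matrix.mul_assoc]
  rw [h, toEuclideanLin_inner_transpose, PiLp.inner_apply]
  refine Finset.sum_congr rfl fun k _ => ?_
  simp [Matrix.toLpLin_apply, Matrix.mulVec_diagonal, -Matrix.mulVec_mulVec]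
  ring

/-- Up to the constant `K`, the function is half the quadratic form of the symmetric matrix
`-A diag(s) Aᵀ - (1/h) (I - A Aᵀ)`, written so that only `‖y‖²` and the coordinates of `Aᵀ y`
appear. With `s k = (α² λ_k² + h)⁻¹` this is `log p_t`. -/
lemma hasGradientAt_quadratic {d D : ℕ} (A : Matrix (Fin D) (Fin d) ℝ) (K h : ℝ)
    (s : Fin d → ℝ) (x : EuclideanSpace ℝ (Fin D)) :
    HasGradientAt (fun y : EuclideanSpace ℝ (Fin D) =>
        K + (-‖y‖ ^ 2 / (2 * h) + ∑ k, (1 / h - s k) / 2 * Matrix.toEuclideanLin Aᵀ y k ^ 2))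
      (-(Matrix.toEuclideanLin (A * Matrix.diagonal s * Aᵀ) x)
        - (1 / h) • (x - Matrix.toEuclideanLin A (Matrix.toEuclideanLin Aᵀ x))) x := by
  have hB : ∀ k, HasFDerivAt (fun y : EuclideanSpace ℝ (Fin D) => Matrix.toEuclideanLin Aᵀ y k)
      ((EuclideanSpace.proj k).comp (LinearMap.toContinuousLinearMap (Matrix.toEuclideanLin Aᵀ)) :
        EuclideanSpace ℝ (Fin D) →L[ℝ] ℝ) x := fun k => ContinuousLinearMap.hasFDerivAt
      ((EuclideanSpace.proj k).comp (LinearMap.toContinuousLinearMap (Matrix.toEuclideanLin Aᵀ)) :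
        EuclideanSpace ℝ (Fin D) →L[ℝ] ℝ)
  have hN := ((hasStrictFDerivAt_norm_sq x).hasFDerivAt.neg.mul_const (2 * h)⁻¹)
  have hS := HasFDerivAt.fun_sum (u := Finset.univ)
    fun k _ => ((hB k).pow 2).const_mul ((1 / h - s k) / 2)
  rw [hasGradientAt_iff_hasFDerivAt]
  refine ((hN.add hS).const_add K).congr_fderiv ?_
  ext v
  have e : inner ℝ (Matrix.toEuclideanLin A (Matrix.toEuclideanLin Aᵀ x)) v
      = ∑ k, Matrix.toEuclideanLin Aᵀ x k * Matrix.toEuclideanLin Aᵀ v k := by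
    rw [toEuclideanLin_inner_transpose, PiLp.inner_apply]
    exact Finset.sum_congr rfl fun k _ => by simp [mul_comm]
  rw [InnerProductSpace.toDual_apply_apply, inner_sub_left, inner_neg_left,
    inner_toEuclideanLin_mul_diagonal, real_inner_smul_left, inner_sub_left, e, mul_sub, Finset.mul_sum]
  simp
  have hsum : ∀ p : Fin d → ℝ, ∑ k, (h⁻¹ - s k) / 2 * (2 * p k) =
      ∑ k, h⁻¹ * p k - ∑ k, s k * p k := fun p => by
    rw [← Finset.sum_sub_distrib]
    exact Finset.sum_congr rfl fun k _ => by ring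
  simp_rw [mul_assoc (2 : ℝ)]
  rw [hsum]
  ring

/-- Completing the square in each latent coordinate and translating by the posterior mean leaves a
Gaussian integral that does not depend on `x`. -/
lemma integral_gaussian_mixture {d D : ℕ} (A : Matrix (Fin D) (Fin d) ℝ) (hA : Aᵀ * A = 1)
    (lam : Fin d → ℝ) (hlam : ∀ k, 0 < lam k) (a h C₁ C₂ : ℝ) (hh : 0 < h)
    (x : EuclideanSpace ℝ (Fin D)) :
    ∫ z : EuclideanSpace ℝ (Fin d),
        C₁ * Real.exp (-‖x - Matrix.toEuclideanLin A (a • z)‖ ^ 2 / (2 * h)) *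
          (C₂ * Real.exp (-(∑ k, (z k) ^ 2 / (lam k) ^ 2) / 2))
      = (C₁ * C₂ * ∫ z : EuclideanSpace ℝ (Fin d),
            Real.exp (∑ k, -((a ^ 2 * lam k ^ 2 + h) / (2 * h * lam k ^ 2)) * z k ^ 2)) *
          Real.exp (-‖x‖ ^ 2 / (2 * h) + ∑ k, (1 / h - (a ^ 2 * lam k ^ 2 + h)⁻¹) / 2 *
            Matrix.toEuclideanLin Aᵀ x k ^ 2) := by
  set w := Matrix.toEuclideanLin Aᵀ x with hw
  -- `m` is the posterior mean of the latent variable given `x`.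
  let m : EuclideanSpace ℝ (Fin d) :=
    WithLp.toLp 2 fun k => a * lam k ^ 2 / (a ^ 2 * lam k ^ 2 + h) * w k
  rw [← integral_sub_right_eq_self (fun z : EuclideanSpace ℝ (Fin d) =>
      Real.exp (∑ k, -((a ^ 2 * lam k ^ 2 + h) / (2 * h * lam k ^ 2)) * z k ^ 2)) m,
    ← integral_const_mul, ← integral_mul_const]
  congr 1
  ext z
  rw [norm_sub_toEuclideanLin_sq A hA, ← hw]
  have key : ∀ p q r s : ℝ, p + q = r + s →
      C₁ * Real.exp p * (C₂ * Real.exp q) = C₁ * C₂ * Real.exp r * Real.exp s := by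
    intro p q r s hpq
    rw [mul_assoc (C₁ * C₂), ← Real.exp_add, ← hpq, Real.exp_add]
    ring
  apply key
  rw [neg_add, add_div, add_assoc, ← add_assoc (Finset.sum _ _), add_comm (Finset.sum _ _),
    add_assoc, ← Finset.sum_add_distrib]
  congr 1
  rw [neg_div, neg_div, ← neg_add, Finset.sum_div, Finset.sum_div, ← Finset.sum_add_distrib,
    ← Finset.sum_neg_distrib]
  refine Finset.sum_congr rfl fun k _ => ?_
  have h1 := (hlam k).ne'
  have h2 : a ^ 2 * lam k ^ 2 + h ≠ 0 := by positivity
  simp only [PiLp.smul_apply, PiLp.sub_apply, smul_eq_mul, m]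
  field_simp
  ring

/-- Gaussian example: explicit score decomposition.
If the latent distribution is `N(0, diag(λ₁², …, λ_d²))`, then for every `t > 0`,
`∇ log p_t(x) = -A Σ_t⁻¹ Aᵀ x - (1/h(t)) (I_D - A Aᵀ) x`
with `Σ_t = diag(α²(t) λ_k² + h(t))`. -/
theorem gaussian_score_decomposition
    (d D : ℕ) (hdD : d < D)
    (A : Matrix (Fin D) (Fin d) ℝ) (hA : Aᵀ * A = 1)
    (lam : Fin d → ℝ) (hlam : ∀ k, 0 < lam k)
    (pz : EuclideanSpace ℝ (Fin d) → ℝ)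
    (hpz : ∀ z : EuclideanSpace ℝ (Fin d),
      pz z = (2 * π) ^ (-(d : ℝ) / 2) * (∏ k, lam k)⁻¹ *
        Real.exp (-(∑ k, (z k) ^ 2 / (lam k) ^ 2) / 2))
    (pt : ℝ → EuclideanSpace ℝ (Fin D) → ℝ)
    (hpt : ∀ t x, pt t x =
      ∫ z : EuclideanSpace ℝ (Fin d),
        (2 * π * hfun t) ^ (-(D : ℝ) / 2) *
          Real.exp (-‖x - Matrix.toEuclideanLin A (afun t • z)‖ ^ 2 / (2 * hfun t)) * pz z)
    (t : ℝ) (ht : 0 < t) (x : EuclideanSpace ℝ (Fin D)) :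
    gradient (fun y => Real.log (pt t y)) x =
      -(Matrix.toEuclideanLin
          (A * Matrix.diagonal (fun k => ((afun t) ^ 2 * (lam k) ^ 2 + hfun t)⁻¹) * Aᵀ) x)
        - (1 / hfun t) • (x - Matrix.toEuclideanLin A (Matrix.toEuclideanLin Aᵀ x)) := by
  have hh : 0 < hfun t := by
    have : Real.exp (-t) < 1 := by simpa using ht
    simp only [hfun]
    linarith
  have hint := integral_exp_pos (integrable_exp_neg_sum_mul_sq
    (fun k => ((afun t) ^ 2 * lam k ^ 2 + hfun t) / (2 * hfun t * lam k ^ 2))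
    (fun k => by have := hlam k; positivity))
  have hC₁ : 0 < (2 * π * hfun t) ^ (-(D : ℝ) / 2) := by positivity
  have hC₂ : 0 < (2 * π) ^ (-(d : ℝ) / 2) * (∏ k, lam k)⁻¹ :=
    mul_pos (by positivity) (inv_pos.2 (Finset.prod_pos fun k _ => hlam k))
  simp_rw [hpt, hpz, integral_gaussian_mixture A hA lam hlam _ _ _ _ hh]
  simp_rw [Real.log_mul (mul_pos (mul_pos hC₁ hC₂) hint).ne' (Real.exp_ne_zero _), Real.log_exp]
  exact (hasGradientAt_quadratic A _ _ _ x).gradient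
end

section
/- Let d ≤ D and let A, V ∈ ℝ^{D×d} satisfy AᵀA = VᵀV = I_d. If ‖(I_D − VVᵀ)A‖_F² ≤ ε for some ε > 0, then there exists an orthogonal matrix U ∈ ℝ^{d×d} (UᵀU = I_d) with ‖U − VᵀA‖_F² ≤ 2ε. -/
open Matrix

/-!
Put `M = VᵀA` and `B = (1 - VVᵀ)A`, so that `MᵀM + BᵀB = 1` and the hypothesis bounds
`tr (1 - MᵀM) = ‖B‖_F²` by `ε`. The spectral theorem for `MᵀM` together with the completion of
the normalised columns of `MQ` to an orthonormal basis gives a singular value decomposition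
`MQ = W S` with `Q, W` orthogonal and `S = diag (√λᵢ)`. The eigenvalues satisfy `λᵢ ≤ 1` because
`1 - λᵢ` is a diagonal entry of `(BQ)ᵀ(BQ)`. For the orthogonal polar factor `U = W Qᵀ`,
`‖U - M‖_F² = ‖W - W S‖_F² = ∑ (1 - √λᵢ)² ≤ ∑ (1 - λᵢ) = ‖B‖_F² ≤ ε`,
which is even better than the required `2ε`.
-/

/-- Squared Frobenius norm of a matrix: `‖M‖_F² = ∑ᵢⱼ M i j ²`. -/
def frobSq {m n : Type*} [Fintype m] [Fintype n] (M : Matrix m n ℝ) : ℝ :=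
  ∑ i, ∑ j, (M i j) ^ 2

theorem frobSq_eq_trace {m n : Type*} [Fintype m] [Fintype n] (M : Matrix m n ℝ) :
    frobSq M = (Mᵀ * M).trace := by
  unfold frobSq
  rw [Finset.sum_comm]
  simp [Matrix.trace, Matrix.mul_apply, pow_two]

/-- A real square matrix with pairwise orthogonal columns is an orthogonal matrix times the
diagonal matrix of its column norms. -/
theorem exists_orthogonal_mul_diagonal {n : Type*} [Fintype n] [DecidableEq n]
    (N : Matrix n n ℝ) (l : n → ℝ) (hN : Nᵀ * N = diagonal l) :
    ∃ W : Matrix n n ℝ, Wᵀ * W = 1 ∧ N = W * diagonal (fun i => √(l i)) := by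
  have hin : ∀ i j, ∑ k, N k i * N k j = if i = j then l i else 0 := fun i j => by
    have := congrFun (congrFun hN i) j
    simpa [Matrix.mul_apply, diagonal_apply] using this
  have hl : ∀ i, 0 ≤ l i := fun i => by
    have h1 := hin i i
    rw [if_pos rfl] at h1
    rw [← h1]
    exact Finset.sum_nonneg fun k _ => mul_self_nonneg _
  let v : n → EuclideanSpace ℝ n := fun i => WithLp.toLp 2 fun k => N k i / √(l i)
  have hv : Orthonormal ℝ (({i | l i ≠ 0} : Set n).domRestrict v) := by
    rw [orthonormal_iff_ite]
    rintro ⟨i, hi⟩ ⟨j, hj⟩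
    have hsum : inner ℝ (v i) (v j) = (∑ k, N k i * N k j) / (√(l i) * √(l j)) := by
      simp only [v, PiLp.inner_apply, Finset.sum_div]
      refine Finset.sum_congr rfl fun k _ => ?_
      simp
      ring
    change inner ℝ (v i) (v j) = _
    simp only [Subtype.mk.injEq, hsum, hin]
    split_ifs with hij
    · subst hij
      rw [Real.mul_self_sqrt (hl i), div_self hi]
    · simp
  obtain ⟨b, hb⟩ := hv.exists_orthonormalBasis_extension_of_card_eq (by simp)
  refine ⟨Matrix.of fun k i => b i k, ?_, ?_⟩
  · ext i j
    have := orthonormal_iff_ite.mp b.orthonormal i j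
    simp only [PiLp.inner_apply] at this
    rw [Matrix.one_apply, ← this]
    simp [Matrix.mul_apply, mul_comm]
  · ext k i
    rw [mul_diagonal, of_apply]
    by_cases hi : l i = 0
    · -- a column of norm zero vanishes
      have h1 := hin i i
      rw [if_pos rfl, hi, Finset.sum_eq_zero_iff_of_nonneg fun k _ => mul_self_nonneg _] at h1
      simpa [hi] using h1 k (Finset.mem_univ k)
    · rw [hb i hi]
      have : √(l i) ≠ 0 := (Real.sqrt_pos.mpr (lt_of_le_of_ne (hl i) (Ne.symm hi))).ne'
      simp [v, this]

theorem exists_orthogonal_diagonalization {n : Type*} [Fintype n] [DecidableEq n]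
    (H : Matrix n n ℝ) (hH : Hᵀ = H) :
    ∃ (Q : Matrix n n ℝ) (l : n → ℝ), Qᵀ * Q = 1 ∧ Qᵀ * H * Q = diagonal l := by
  have hh : H.IsHermitian := by
    rw [Matrix.IsHermitian, conjTranspose_eq_transpose_of_trivial, hH]
  let Q : Matrix n n ℝ := hh.eigenvectorUnitary
  have hs : star Q = Qᵀ := by
    rw [star_eq_conjTranspose, conjTranspose_eq_transpose_of_trivial]
  have hQ : Qᵀ * Q = 1 := by
    rw [← hs]
    exact Unitary.coe_star_mul_self hh.eigenvectorUnitary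
  refine ⟨Q, hh.eigenvalues, hQ, ?_⟩
  have h1 : H = Q * diagonal hh.eigenvalues * Qᵀ := by
    rw [← hs]
    simpa [Unitary.conjStarAlgAut_apply] using hh.spectral_theorem
  calc Qᵀ * H * Q = (Qᵀ * Q) * diagonal hh.eigenvalues * (Qᵀ * Q) := by
        conv_lhs => rw [h1]
        simp only [Matrix.mul_assoc]
    _ = _ := by rw [hQ]; simp

/-- existence of an orthogonal alignment.
If `AᵀA = VᵀV = I_d` and `‖(I_D - VVᵀ)A‖_F² ≤ ε`, then there is an orthogonal
`U ∈ ℝ^{d×d}` with `‖U - VᵀA‖_F² ≤ 2ε`. -/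
theorem orthogonal_alignment_exists
    (d D : ℕ) (hdD : d ≤ D)
    (A V : Matrix (Fin D) (Fin d) ℝ)
    (hA : Aᵀ * A = 1) (hV : Vᵀ * V = 1)
    (ε : ℝ) (hε : 0 < ε)
    (h : frobSq ((1 - V * Vᵀ) * A) ≤ ε) :
    ∃ U : Matrix (Fin d) (Fin d) ℝ, Uᵀ * U = 1 ∧ frobSq (U - Vᵀ * A) ≤ 2 * ε := by
  set B := (1 - V * Vᵀ) * A with hB
  set M := Vᵀ * A with hM
  have hBB : Bᵀ * B = 1 - Mᵀ * M := by
    have hP : (1 - V * Vᵀ)ᵀ * (1 - V * Vᵀ) = 1 - V * Vᵀ := by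
      have : V * Vᵀ * (V * Vᵀ) = V * Vᵀ := by
        rw [Matrix.mul_assoc, ← Matrix.mul_assoc Vᵀ, hV, Matrix.one_mul]
      simp [Matrix.sub_mul, Matrix.mul_sub, this]
    calc Bᵀ * B = Aᵀ * ((1 - V * Vᵀ)ᵀ * (1 - V * Vᵀ)) * A := by
          rw [hB, transpose_mul]; simp only [Matrix.mul_assoc]
      _ = 1 - Mᵀ * M := by
          rw [hP, Matrix.mul_sub, Matrix.sub_mul, Matrix.mul_one, hA, hM, transpose_mul]
          simp [Matrix.mul_assoc]
  obtain ⟨Q, l, hQ, hl⟩ := exists_orthogonal_diagonalization (Mᵀ * M) (by simp)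
  have hQ' : Q * Qᵀ = 1 := mul_eq_one_comm.mp hQ
  have hN : (M * Q)ᵀ * (M * Q) = diagonal l := by
    rw [← hl, transpose_mul]; simp only [Matrix.mul_assoc]
  obtain ⟨W, hW, hNW⟩ := exists_orthogonal_mul_diagonal (M * Q) l hN
  have hBQ : (B * Q)ᵀ * (B * Q) = diagonal fun i => 1 - l i := by
    calc (B * Q)ᵀ * (B * Q) = Qᵀ * (Bᵀ * B) * Q := by
          rw [transpose_mul]; simp only [Matrix.mul_assoc]
      _ = 1 - diagonal l := by
          rw [hBB, Matrix.mul_sub, Matrix.sub_mul, Matrix.mul_one, hQ, hl]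
      _ = _ := by rw [← diagonal_one, diagonal_sub]
  have nonneg_of_gram : ∀ {m : ℕ} (X : Matrix (Fin m) (Fin d) ℝ) (c : Fin d → ℝ),
      Xᵀ * X = diagonal c → ∀ i, 0 ≤ c i := fun X c hX i => by
    have h1 := congrFun (congrFun hX i) i
    rw [diagonal_apply_eq, Matrix.mul_apply] at h1
    rw [← h1]
    exact Finset.sum_nonneg fun k _ => mul_self_nonneg _
  have hl0 := nonneg_of_gram _ _ hN
  have hl1 := nonneg_of_gram _ _ hBQ
  -- right multiplication by an orthogonal matrix preserves the Frobenius norm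
  have inv : ∀ {m : ℕ} (X : Matrix (Fin m) (Fin d) ℝ), frobSq (X * Q) = frobSq X := fun X => by
    rw [frobSq_eq_trace, frobSq_eq_trace, transpose_mul, Matrix.mul_assoc, trace_mul_comm,
      Matrix.mul_assoc, Matrix.mul_assoc, hQ', Matrix.mul_one]
  have hBsum : frobSq B = ∑ i, (1 - l i) := by
    rw [← inv, frobSq_eq_trace, hBQ, trace_diagonal]
  refine ⟨W * Qᵀ, ?_, ?_⟩
  · rw [transpose_mul, transpose_transpose, Matrix.mul_assoc, ← Matrix.mul_assoc Wᵀ, hW,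
      Matrix.one_mul, hQ']
  · have h1 : (W * Qᵀ - M) * Q = W * diagonal fun i => 1 - √(l i) := by
      rw [Matrix.sub_mul, Matrix.mul_assoc, hQ, hNW, ← Matrix.mul_sub, ← diagonal_one,
        diagonal_sub]
    have h2 : frobSq (W * Qᵀ - M) = ∑ i, (1 - √(l i)) * (1 - √(l i)) := by
      rw [← inv, h1, frobSq_eq_trace, transpose_mul, Matrix.mul_assoc, ← Matrix.mul_assoc Wᵀ,
        hW, Matrix.one_mul, diagonal_transpose, diagonal_mul_diagonal, trace_diagonal]
    have h3 : ∑ i, (1 - √(l i)) * (1 - √(l i)) ≤ ∑ i, (1 - l i) := by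
      refine Finset.sum_le_sum fun i _ => ?_
      have hs0 := Real.sqrt_nonneg (l i)
      have hs1 : √(l i) ≤ 1 := Real.sqrt_le_one.mpr (by linarith [hl1 i])
      nlinarith [Real.mul_self_sqrt (hl0 i)]
    linarith
end

section
/- Let (Ω, μ) be a measure space and let X, Y : Ω → ℝ^d be measurable with ∫‖X‖₂² dμ < ∞ and ∫‖Y‖₂² dμ < ∞. Let A, V ∈ ℝ^{D×d} have orthonormal columns, and suppose ∫ ‖V X(ω) − A Y(ω)‖₂² dμ(ω) ≤ ε for some ε > 0. Let λ_min be the smallest eigenvalue of the d×d matrix ∫ Y(ω) Y(ω)ᵀ dμ(ω), and assume λ_min > 0. Then ‖(I_D − VVᵀ) A‖_F² ≤ ε / λ_min. -/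
/-!
Put `P = 1 - V Vᵀ`, the orthogonal projection onto the complement of the range of `V`, and
`B = P A`. Since `P V = 0`, pointwise `B Y = -P (V X - A Y)`, and `P` is a contraction, so
`‖B Y‖² ≤ ‖V X - A Y‖²` (`projection_bound`). Integrating, `∫ ‖B Y‖² ≤ ε`. On the other hand
`∫ ‖B Y‖² = ∑ᵢ bᵢ ⬝ M bᵢ`, where the `bᵢ` are the rows of `B` and `M = ∫ Y Yᵀ`
(`quadForm_secondMoment`), and each summand is at least `lmin ‖bᵢ‖²`; the sum of these lower
bounds is `lmin ‖B‖_F²`.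
-/

open MeasureTheory Matrix

/-- `1 - V Vᵀ` annihilates the range of `V` and does not increase the Euclidean norm. -/
lemma projection_bound {d D : ℕ} (A V : Matrix (Fin D) (Fin d) ℝ) (hV : Vᵀ * V = 1)
    (x y : Fin d → ℝ) :
    (((1 - V * Vᵀ) * A) *ᵥ y) ⬝ᵥ (((1 - V * Vᵀ) * A) *ᵥ y)
      ≤ (V *ᵥ x - A *ᵥ y) ⬝ᵥ (V *ᵥ x - A *ᵥ y) := by
  set w := V *ᵥ x - A *ᵥ y with hw
  have hVw : Vᵀ *ᵥ w = x - Vᵀ *ᵥ (A *ᵥ y) := by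
    rw [hw, mulVec_sub, mulVec_mulVec, hV, one_mulVec]
  have hB : ((1 - V * Vᵀ) * A) *ᵥ y = -(w - V *ᵥ (Vᵀ *ᵥ w)) := by
    rw [hVw, ← mulVec_mulVec, sub_mulVec, one_mulVec, ← mulVec_mulVec, mulVec_sub, hw]
    abel
  clear_value w
  -- Both cross terms and the square of `V Vᵀ w` equal `‖Vᵀ w‖²`.
  have h1 : w ⬝ᵥ (V *ᵥ (Vᵀ *ᵥ w)) = (Vᵀ *ᵥ w) ⬝ᵥ (Vᵀ *ᵥ w) := by
    rw [dotProduct_mulVec, ← mulVec_transpose]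
  have h2 : (V *ᵥ (Vᵀ *ᵥ w)) ⬝ᵥ (V *ᵥ (Vᵀ *ᵥ w)) = (Vᵀ *ᵥ w) ⬝ᵥ (Vᵀ *ᵥ w) := by
    rw [dotProduct_mulVec, ← mulVec_transpose, mulVec_mulVec (Vᵀ *ᵥ w) Vᵀ V, hV,
      one_mulVec]
  have h3 : 0 ≤ (Vᵀ *ᵥ w) ⬝ᵥ (Vᵀ *ᵥ w) :=
    Finset.sum_nonneg fun i _ => mul_self_nonneg _
  rw [hB, neg_dotProduct_neg, sub_dotProduct, dotProduct_sub, dotProduct_sub,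
    dotProduct_comm (V *ᵥ (Vᵀ *ᵥ w)) w, h1, h2]
  linarith

lemma integrable_coord_mul {Ω : Type*} [MeasurableSpace Ω] {μ : Measure Ω} {d : ℕ}
    {Y : Ω → EuclideanSpace ℝ (Fin d)} (hY : Measurable Y)
    (hY2 : Integrable (fun ω => ‖Y ω‖ ^ 2) μ) (i j : Fin d) :
    Integrable (fun ω => Y ω i * Y ω j) μ := by
  refine hY2.mono' (by fun_prop) (Filter.Eventually.of_forall fun ω => ?_)
  rw [norm_mul, sq]
  exact mul_le_mul (PiLp.norm_apply_le _ _) (PiLp.norm_apply_le _ _)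
    (norm_nonneg _) (norm_nonneg _)

/-- The quadratic form of the second-moment matrix at `v` is the second moment of `v ⬝ Y`. -/
lemma quadForm_secondMoment {Ω : Type*} [MeasurableSpace Ω] {μ : Measure Ω} {d : ℕ}
    {Y : Ω → EuclideanSpace ℝ (Fin d)} (hY : Measurable Y)
    (hY2 : Integrable (fun ω => ‖Y ω‖ ^ 2) μ) (v : Fin d → ℝ) :
    Integrable (fun ω => (v ⬝ᵥ (Y ω).ofLp) * (v ⬝ᵥ (Y ω).ofLp)) μ ∧
    v ⬝ᵥ (Matrix.of fun i j => ∫ ω, Y ω i * Y ω j ∂μ).mulVec v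
      = ∫ ω, (v ⬝ᵥ (Y ω).ofLp) * (v ⬝ᵥ (Y ω).ofLp) ∂μ := by
  have hexp : (fun ω => (v ⬝ᵥ (Y ω).ofLp) * (v ⬝ᵥ (Y ω).ofLp))
      = fun ω => ∑ i, ∑ j, (v i * v j) * (Y ω i * Y ω j) := by
    funext ω
    simp only [dotProduct, Finset.sum_mul_sum]
    exact Finset.sum_congr rfl fun i _ => Finset.sum_congr rfl fun j _ => by ring
  have hint : ∀ i j, Integrable (fun ω => (v i * v j) * (Y ω i * Y ω j)) μ :=
    fun i j => (integrable_coord_mul hY hY2 i j).const_mul _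
  rw [hexp]
  refine ⟨integrable_finsetSum _ fun i _ => integrable_finsetSum _ fun j _ => hint i j, ?_⟩
  rw [integral_finsetSum _ fun i _ => integrable_finsetSum _ fun j _ => hint i j]
  simp only [dotProduct, mulVec, of_apply, Finset.mul_sum]
  refine Finset.sum_congr rfl fun i _ => ?_
  rw [integral_finsetSum _ fun j _ => hint i j]
  refine Finset.sum_congr rfl fun j _ => ?_
  rw [integral_const_mul]
  ring

/-- subspace recovery from an L² matching error.
If `∫ ‖V X - A Y‖² dμ ≤ ε` for orthonormal-column matrices `A, V`, and the
smallest eigenvalue `λ_min` of `∫ Y Yᵀ dμ` is positive, then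
`‖(I_D - VVᵀ)A‖_F² ≤ ε / λ_min`.  (The smallest eigenvalue of the symmetric
second-moment matrix `M` is characterized as the greatest `c` with
`c ⟨v,v⟩ ≤ ⟨v, M v⟩` for all `v`.) -/
theorem subspace_recovery
    {Ω : Type*} [MeasurableSpace Ω] (μ : Measure Ω)
    (d D : ℕ)
    (X Y : Ω → EuclideanSpace ℝ (Fin d))
    (hX : Measurable X) (hY : Measurable Y)
    (hX2 : Integrable (fun ω => ‖X ω‖ ^ 2) μ)
    (hY2 : Integrable (fun ω => ‖Y ω‖ ^ 2) μ)
    (A V : Matrix (Fin D) (Fin d) ℝ)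
    (hA : Aᵀ * A = 1) (hV : Vᵀ * V = 1)
    (ε : ℝ) (hε : 0 < ε)
    (hclose : ∫ ω, ‖Matrix.toEuclideanLin V (X ω) - Matrix.toEuclideanLin A (Y ω)‖ ^ 2 ∂μ ≤ ε)
    (lmin : ℝ) (hlpos : 0 < lmin)
    (hlmin : IsGreatest {c : ℝ | ∀ v : Fin d → ℝ,
        c * (v ⬝ᵥ v) ≤ v ⬝ᵥ (Matrix.of fun i j => ∫ ω, Y ω i * Y ω j ∂μ).mulVec v} lmin) :
    frobSq ((1 - V * Vᵀ) * A) ≤ ε / lmin := by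
  have hXm : MemLp X 2 μ := (memLp_two_iff_integrable_sq_norm hX.aestronglyMeasurable).2 hX2
  have hYm : MemLp Y 2 μ := (memLp_two_iff_integrable_sq_norm hY.aestronglyMeasurable).2 hY2
  have hres : Integrable (fun ω =>
      ‖Matrix.toEuclideanLin V (X ω) - Matrix.toEuclideanLin A (Y ω)‖ ^ 2) μ := by
    have h1 := (LinearMap.toContinuousLinearMap (Matrix.toEuclideanLin V)).comp_memLp' hXm
    have h2 := (LinearMap.toContinuousLinearMap (Matrix.toEuclideanLin A)).comp_memLp' hYm
    have h := h1.sub h2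
    exact (memLp_two_iff_integrable_sq_norm h.1).1 h
  set B := (1 - V * Vᵀ) * A with hB
  have hq := fun i => quadForm_secondMoment hY hY2 (B i)
  rw [le_div_iff₀ hlpos]
  calc frobSq B * lmin = ∑ i, lmin * (B i ⬝ᵥ B i) := by
        simp only [frobSq, dotProduct, ← Finset.mul_sum, ← sq]
        ring
    _ ≤ ∑ i, ∫ ω, (B i ⬝ᵥ (Y ω).ofLp) * (B i ⬝ᵥ (Y ω).ofLp) ∂μ :=
        Finset.sum_le_sum fun i _ => (hlmin.1 (B i)).trans (hq i).2.le
    _ = ∫ ω, ∑ i, (B i ⬝ᵥ (Y ω).ofLp) * (B i ⬝ᵥ (Y ω).ofLp) ∂μ :=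
        (integral_finsetSum _ fun i _ => (hq i).1).symm
    _ ≤ ∫ ω, ‖Matrix.toEuclideanLin V (X ω) - Matrix.toEuclideanLin A (Y ω)‖ ^ 2 ∂μ := by
        refine integral_mono (integrable_finsetSum _ fun i _ => (hq i).1) hres fun ω => ?_
        have h := projection_bound A V hV (X ω).ofLp (Y ω).ofLp
        rw [EuclideanSpace.real_norm_sq_eq]
        simp only [sq]
        exact h
    _ ≤ ε := hclose
end

section
/- Let p₀ be a positive, continuously differentiable probability density on ℝ^d with finite Fisher information ∫ p₀(z) ‖∇ log p₀(z)‖₂² dz < ∞ and sub-Gaussian tails. For t > 0, let p_t(z) = ∫_{ℝ^d} p₀(z₀) φ_t(z|z₀) dz₀ where φ_t(z|z₀) is the Gaussian density with mean √(1−h(t)) z₀ and covariance h(t) I_d. Then ∫ p_t(z) ‖∇ log p_t(z)‖₂² dz ≤ (1/(1−h(t))) · ∫ p₀(z₀) ‖∇ log p₀(z₀)‖₂² dz₀. -/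
/-!
Write `K` for the centred Gaussian density of covariance `h(t) I_d` and `a = √(1 - h(t)) > 0`, so
that `p_t(z) = ∫ p₀(y) K(z - a y) dy`.  Differentiating under the integral sign and integrating by
parts in `y` moves the derivative from the kernel to `p₀`:
`D p_t(z) = a⁻¹ ∫ K(z - a y) D p₀(y) dy` (`fderiv_smoothing_apply`).  The Cauchy–Schwarz inequality
with respect to the measure `K(z - a y) p₀(y) dy` then gives the pointwise bound
`‖D p_t(z)‖² / p_t(z) ≤ a⁻² ∫ K(z - a y) ‖D p₀(y)‖² / p₀(y) dy`
(`sq_norm_fderiv_smoothing_div_le`), and integrating in `z`, with Tonelli and `∫ K = 1`, yields the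
claim, since `a² = 1 - h(t)`.

The analytic steps are justified by the boundedness of `K` and `D K` and the integrability of `p₀`
and `D p₀`; the latter holds because `‖D p₀‖ ≤ p₀ + ‖D p₀‖² / p₀`.
-/

open MeasureTheory Real

/-- Gaussian transition density with mean `√(1-h(t)) z₀` and covariance `h(t) I_d`. -/
noncomputable def phiT {d : ℕ} (t : ℝ) (z z₀ : EuclideanSpace ℝ (Fin d)) : ℝ :=
  (2 * Real.pi * hfun t) ^ (-(d : ℝ) / 2) *
    Real.exp (-‖z - Real.sqrt (1 - hfun t) • z₀‖ ^ 2 / (2 * hfun t))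

/-! ### Smoothing by a bounded kernel with bounded derivative -/

section Kernel

set_option linter.unusedSectionVars false

variable {E : Type*} [NormedAddCommGroup E] [NormedSpace ℝ E] [FiniteDimensional ℝ E]
  [MeasurableSpace E] [BorelSpace E] {μ : Measure E} [μ.IsAddHaarMeasure]
  {p K : E → ℝ} {a c C : ℝ}

/-- Cauchy–Schwarz for the weight `w * p`, in the form needed for the Fisher information. -/
lemma sq_integral_mul_le_integral_mul_integral_div {w s : E → ℝ}
    (hw : ∀ x, 0 ≤ w x) (hp : ∀ x, 0 < p x)
    (h0 : Integrable (fun x => w x * p x) μ) (h1 : Integrable (fun x => w x * s x) μ)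
    (h2 : Integrable (fun x => w x * (s x ^ 2 / p x)) μ) (hP : 0 < ∫ x, w x * p x ∂μ) :
    (∫ x, w x * s x ∂μ) ^ 2 ≤ (∫ x, w x * p x ∂μ) * ∫ x, w x * (s x ^ 2 / p x) ∂μ := by
  have key : ∀ l : ℝ, 0 ≤ (∫ x, w x * (s x ^ 2 / p x) ∂μ) - 2 * l * (∫ x, w x * s x ∂μ)
      + l ^ 2 * ∫ x, w x * p x ∂μ := by
    intro l
    have h3 : Integrable (fun x => w x * (s x ^ 2 / p x) - 2 * l * (w x * s x)) μ :=
      h2.sub (h1.const_mul _)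
    rw [← integral_const_mul, ← integral_const_mul, ← integral_sub h2 (h1.const_mul _),
      ← integral_add h3 (h0.const_mul _)]
    refine integral_nonneg fun x => ?_
    have hx := (hp x).ne'
    have : w x * (s x ^ 2 / p x) - 2 * l * (w x * s x) + l ^ 2 * (w x * p x)
        = w x * ((s x - l * p x) ^ 2 / p x) := by field_simp; ring
    simp only [Pi.zero_apply]
    rw [this]
    exact mul_nonneg (hw x) (div_nonneg (sq_nonneg _) (hp x).le)
  set M := ∫ x, w x * s x ∂μ
  set P := ∫ x, w x * p x ∂μ
  set N := ∫ x, w x * (s x ^ 2 / p x) ∂μ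
  -- The quadratic polynomial is minimal at `l = M / P`.
  have h := key (M / P)
  have e : N - 2 * (M / P) * M + (M / P) ^ 2 * P = N - M ^ 2 / P := by field_simp; ring
  rw [e, sub_nonneg, div_le_iff₀ hP] at h
  linarith

lemma integrable_kernel_mul (hK : Continuous K) (hK0 : ∀ x, 0 < K x)
    (hKb : ∀ x, K x ≤ c) {g : E → ℝ} (hg : Integrable g μ) (z : E) :
    Integrable (fun y => K (z - a • y) * g y) μ := by
  refine hg.bdd_mul (c := c) ?_ (.of_forall fun y => ?_)
  · exact (hK.comp (by fun_prop)).aestronglyMeasurable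
  · rw [Real.norm_of_nonneg (hK0 _).le]; exact hKb _

/-- The derivative falls on the kernel: differentiation under the integral sign. -/
lemma hasFDerivAt_smoothing (hp : Integrable p μ) (hpos : ∀ y, 0 < p y) (hK : ContDiff ℝ 1 K)
    (hK0 : ∀ x, 0 < K x) (hKb : ∀ x, K x ≤ c) (hKd : ∀ x, ‖fderiv ℝ K x‖ ≤ C) (z : E) :
    HasFDerivAt (fun w => ∫ y, p y * K (w - a • y) ∂μ)
      (∫ y, p y • fderiv ℝ K (z - a • y) ∂μ) z := by
  have hint : ∀ w, Integrable (fun y => p y * K (w - a • y)) μ := fun w => by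
    simpa only [mul_comm] using integrable_kernel_mul hK.continuous hK0 hKb hp w
  refine hasFDerivAt_integral_of_dominated_of_fderiv_le (s := Set.univ)
    (F' := fun w y => p y • fderiv ℝ K (w - a • y)) (bound := fun y => p y * C) Filter.univ_mem
    (.of_forall fun w => (hint w).aestronglyMeasurable) (hint z) ?_ ?_ (hp.mul_const _) ?_
  · exact hp.aestronglyMeasurable.smul
      (((hK.continuous_fderiv one_ne_zero).comp (by fun_prop :
        Continuous fun y : E => z - a • y)).aestronglyMeasurable)
  · refine .of_forall fun y w _ => ?_
    rw [norm_smul, Real.norm_of_nonneg (hpos y).le]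
    exact mul_le_mul_of_nonneg_left (hKd _) (hpos y).le
  · refine .of_forall fun y w _ => ?_
    have h := ((hK.differentiable one_ne_zero) (w - a • y)).hasFDerivAt
    exact (h.comp w ((hasFDerivAt_id w).sub_const (a • y))).const_mul (p y)

/-- The derivative falls on `p`: integration by parts against the kernel. -/
lemma fderiv_smoothing_apply (ha : 0 < a) (hp : Integrable p μ) (hpos : ∀ y, 0 < p y)
    (hpd : ContDiff ℝ 1 p) (hDp : Integrable (fun y => ‖fderiv ℝ p y‖) μ) (hK : ContDiff ℝ 1 K)
    (hK0 : ∀ x, 0 < K x) (hKb : ∀ x, K x ≤ c) (hKd : ∀ x, ‖fderiv ℝ K x‖ ≤ C) (z v : E) :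
    fderiv ℝ (fun w => ∫ y, p y * K (w - a • y) ∂μ) z v
      = a⁻¹ * ∫ y, K (z - a • y) * fderiv ℝ p y v ∂μ := by
  have hcont : Continuous fun y : E => z - a • y := by fun_prop
  have hKc := (hK.continuous_fderiv one_ne_zero).comp hcont
  have hDpv : Integrable (fun y => fderiv ℝ p y v) μ :=
    (ContinuousLinearMap.apply ℝ ℝ v).integrable_comp
      ((integrable_norm_iff (hpd.continuous_fderiv one_ne_zero).aestronglyMeasurable).1 hDp)
  have hDK : Integrable (fun y => p y • fderiv ℝ K (z - a • y)) μ :=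
    hp.smul_bdd C hKc.aestronglyMeasurable (.of_forall fun y => hKd _)
  have hDKv : Integrable (fun y => p y * fderiv ℝ K (z - a • y) v) μ := by
    simpa using (ContinuousLinearMap.apply ℝ ℝ v).integrable_comp hDK
  have hder : ∀ y, HasFDerivAt (fun y : E => K (z - a • y))
      ((fderiv ℝ K (z - a • y)).comp (-(a • ContinuousLinearMap.id ℝ E))) y := fun y =>
    ((hK.differentiable one_ne_zero) (z - a • y)).hasFDerivAt.comp y
      (((hasFDerivAt_id y).const_smul a).const_sub z)
  have hder' : ∀ y, fderiv ℝ (fun y : E => K (z - a • y)) y v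
      = -a * fderiv ℝ K (z - a • y) v := fun y => by
    rw [(hder y).fderiv]; simp
  have hpK : Integrable (fun y => p y * K (z - a • y)) μ := by
    simpa only [mul_comm] using integrable_kernel_mul hK.continuous hK0 hKb hp z
  have ibp := integral_mul_fderiv_eq_neg_fderiv_mul_of_integrable (μ := μ) (f := p)
    (g := fun y => K (z - a • y)) (v := v)
    (by simpa only [mul_comm] using integrable_kernel_mul hK.continuous hK0 hKb hDpv z)
    (by
      simp only [hder']
      refine (hDKv.const_mul (-a)).congr (.of_forall fun y => ?_)
      simp only; ring)
    hpK (fun x _ => hpd.differentiable one_ne_zero x) (fun x _ => (hder x).differentiableAt)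
  rw [(hasFDerivAt_smoothing hp hpos hK hK0 hKb hKd z).fderiv,
    ContinuousLinearMap.integral_apply hDK]
  simp only [hder'] at ibp
  have e1 : ∫ y, p y * (-a * fderiv ℝ K (z - a • y) v) ∂μ
      = -a * ∫ y, p y * fderiv ℝ K (z - a • y) v ∂μ := by
    rw [← integral_const_mul]; congr 1; ext y; ring
  rw [e1] at ibp
  simp only [smul_apply, smul_eq_mul, mul_comm (K _)]
  field_simp
  linarith

lemma smoothing_pos_s12 (hp : Integrable p μ) (hpos : ∀ y, 0 < p y) (hK : Continuous K)
    (hK0 : ∀ x, 0 < K x) (hKb : ∀ x, K x ≤ c) (z : E) :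
    0 < ∫ y, p y * K (z - a • y) ∂μ := by
  have h := integrable_kernel_mul (a := a) hK hK0 hKb hp z
  simp only [mul_comm (p _)]
  rw [integral_pos_iff_support_of_nonneg (fun y => (mul_pos (hK0 _) (hpos y)).le) h]
  have : Function.support (fun y => K (z - a • y) * p y) = Set.univ :=
    Set.eq_univ_of_forall fun y => (mul_pos (hK0 _) (hpos y)).ne'
  rw [this, Measure.measure_univ_pos]
  exact NeZero.ne μ

/-- The Fisher information density of the smoothed density is dominated, up to the factor `a⁻²`,
by the smoothed Fisher information density. -/
lemma sq_norm_fderiv_smoothing_div_le (ha : 0 < a) (hp : Integrable p μ) (hpos : ∀ y, 0 < p y)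
    (hpd : ContDiff ℝ 1 p) (hJ : Integrable (fun y => ‖fderiv ℝ p y‖ ^ 2 / p y) μ)
    (hK : ContDiff ℝ 1 K)
    (hK0 : ∀ x, 0 < K x) (hKb : ∀ x, K x ≤ c) (hKd : ∀ x, ‖fderiv ℝ K x‖ ≤ C) (z : E) :
    ‖fderiv ℝ (fun w => ∫ y, p y * K (w - a • y) ∂μ) z‖ ^ 2 / (∫ y, p y * K (z - a • y) ∂μ)
      ≤ 1 / a ^ 2 * ∫ y, K (z - a • y) * (‖fderiv ℝ p y‖ ^ 2 / p y) ∂μ := by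
  have hDc := hpd.continuous_fderiv one_ne_zero
  have hDp : Integrable (fun y => ‖fderiv ℝ p y‖) μ := by
    refine (hp.add hJ).mono' hDc.norm.aestronglyMeasurable (.of_forall fun y => ?_)
    have hy := hpos y
    rw [norm_norm, Pi.add_apply, ← sub_nonneg]
    have : p y + ‖fderiv ℝ p y‖ ^ 2 / p y - ‖fderiv ℝ p y‖
        = ((p y - ‖fderiv ℝ p y‖) ^ 2 + p y * ‖fderiv ℝ p y‖) / p y := by field_simp; ring
    rw [this]
    positivity
  have hPpos := smoothing_pos_s12 (μ := μ) (a := a) hp hpos hK.continuous hK0 hKb z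
  have hM := integrable_kernel_mul (a := a) hK.continuous hK0 hKb hDp z
  have hnorm : ‖fderiv ℝ (fun w => ∫ y, p y * K (w - a • y) ∂μ) z‖
      ≤ a⁻¹ * ∫ y, K (z - a • y) * ‖fderiv ℝ p y‖ ∂μ := by
    have hM0 : 0 ≤ ∫ y, K (z - a • y) * ‖fderiv ℝ p y‖ ∂μ :=
      integral_nonneg fun y => mul_nonneg (hK0 _).le (norm_nonneg _)
    refine ContinuousLinearMap.opNorm_le_bound _ (by positivity) fun v => ?_
    rw [fderiv_smoothing_apply ha hp hpos hpd hDp hK hK0 hKb hKd, norm_mul,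
      Real.norm_of_nonneg (inv_pos.2 ha).le, mul_assoc]
    refine mul_le_mul_of_nonneg_left ?_ (inv_pos.2 ha).le
    rw [← integral_mul_const]
    refine norm_integral_le_of_norm_le (hM.mul_const _) (.of_forall fun y => ?_)
    rw [norm_mul, Real.norm_of_nonneg (hK0 _).le, mul_assoc]
    exact mul_le_mul_of_nonneg_left ((fderiv ℝ p y).le_opNorm v) (hK0 _).le
  have cs := sq_integral_mul_le_integral_mul_integral_div (μ := μ) (p := p)
    (w := fun y => K (z - a • y)) (s := fun y => ‖fderiv ℝ p y‖) (fun y => (hK0 _).le) hpos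
    (integrable_kernel_mul hK.continuous hK0 hKb hp z) hM
    (integrable_kernel_mul hK.continuous hK0 hKb hJ z)
    (by simpa only [mul_comm] using hPpos)
  rw [div_le_iff₀ hPpos]
  calc _ ≤ (a⁻¹ * ∫ y, K (z - a • y) * ‖fderiv ℝ p y‖ ∂μ) ^ 2 := by gcongr
    _ = 1 / a ^ 2 * (∫ y, K (z - a • y) * ‖fderiv ℝ p y‖ ∂μ) ^ 2 := by field_simp
    _ ≤ 1 / a ^ 2 * ((∫ y, K (z - a • y) * p y ∂μ)
          * ∫ y, K (z - a • y) * (‖fderiv ℝ p y‖ ^ 2 / p y) ∂μ) := by gcongr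
    _ = _ := by simp only [mul_comm (p _)]; ring

lemma integral_integral_kernel_mul (hK : Continuous K) (hK0 : ∀ x, 0 < K x)
    (hK1 : ∫ x, K x ∂μ = 1) {g : E → ℝ} (hg : Integrable g μ) :
    Integrable (fun z => ∫ y, K (z - a • y) * g y ∂μ) μ ∧
      ∫ z, ∫ y, K (z - a • y) * g y ∂μ ∂μ = ∫ y, g y ∂μ := by
  have hKi : Integrable K μ := by
    by_contra h
    rw [integral_undef h] at hK1
    exact zero_ne_one hK1
  have hprod : Integrable (Function.uncurry fun z y => K (z - a • y) * g y) (μ.prod μ) := by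
    rw [integrable_prod_iff']
    · refine ⟨.of_forall fun y => (hKi.comp_sub_right (a • y)).mul_const (g y), ?_⟩
      refine hg.norm.congr (.of_forall fun y => ?_)
      simp only [Function.uncurry, norm_mul, Real.norm_of_nonneg (hK0 _).le]
      rw [integral_mul_const, integral_sub_right_eq_self K (a • y), hK1, one_mul]
    · have h1 : Continuous fun q : E × E => K (q.1 - a • q.2) := hK.comp (by fun_prop)
      exact h1.aestronglyMeasurable.mul hg.aestronglyMeasurable.comp_snd
  refine ⟨hprod.integral_prod_left, ?_⟩
  rw [integral_integral_swap hprod]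
  congr 1
  ext y
  rw [integral_mul_const, integral_sub_right_eq_self K (a • y), hK1, one_mul]

end Kernel

/-! ### The Gaussian kernel -/

section Gaussian

variable {d : ℕ}

/-- The centred Gaussian density with covariance `h I_d`. -/
noncomputable def gaussKernel (d : ℕ) (h : ℝ) (x : EuclideanSpace ℝ (Fin d)) : ℝ :=
  (2 * π * h) ^ (-(d : ℝ) / 2) * Real.exp (-‖x‖ ^ 2 / (2 * h))

variable {h : ℝ}

lemma gaussKernel_pos (hh : 0 < h) (x : EuclideanSpace ℝ (Fin d)) : 0 < gaussKernel d h x := by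
  unfold gaussKernel; positivity

lemma gaussKernel_le (hh : 0 < h) (x : EuclideanSpace ℝ (Fin d)) :
    gaussKernel d h x ≤ (2 * π * h) ^ (-(d : ℝ) / 2) := by
  refine mul_le_of_le_one_right (by positivity) (Real.exp_le_one_iff.2 ?_)
  exact div_nonpos_of_nonpos_of_nonneg (by simp) (by positivity)

lemma contDiff_gaussKernel : ContDiff ℝ 1 (gaussKernel d h) := by
  unfold gaussKernel
  exact contDiff_const.mul (((contDiff_norm_sq ℝ).neg.div_const _).exp)

lemma integral_gaussKernel (hh : 0 < h) : ∫ x, gaussKernel d h x = 1 := by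
  unfold gaussKernel
  have e : ∀ x : EuclideanSpace ℝ (Fin d),
      -‖x‖ ^ 2 / (2 * h) = -(1 / (2 * h)) * ‖x‖ ^ 2 := fun x => by ring
  simp only [e]
  rw [integral_const_mul, GaussianFourier.integral_rexp_neg_mul_sq_norm (by positivity)]
  have e2 : π / (1 / (2 * h)) = 2 * π * h := by field_simp
  rw [e2, finrank_euclideanSpace_fin, ← Real.rpow_add (by positivity), neg_div, neg_add_cancel,
    Real.rpow_zero]

lemma norm_fderiv_gaussKernel_le (hh : 0 < h) (x : EuclideanSpace ℝ (Fin d)) :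
    ‖fderiv ℝ (gaussKernel d h) x‖ ≤ (2 * π * h) ^ (-(d : ℝ) / 2) * (1 / (2 * h) + 1) := by
  have hd : HasFDerivAt (gaussKernel d h)
      ((2 * π * h) ^ (-(d : ℝ) / 2) • (Real.exp (-‖x‖ ^ 2 / (2 * h)) •
        ((-(1 / (2 * h))) • ((2 : ℝ) • innerSL ℝ x)))) x := by
    have h1 := (hasStrictFDerivAt_norm_sq x).hasFDerivAt.const_mul (-(1 / (2 * h)))
    have h2 := (h1.exp).const_mul ((2 * π * h) ^ (-(d : ℝ) / 2))
    have e : ∀ x : EuclideanSpace ℝ (Fin d),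
      -‖x‖ ^ 2 / (2 * h) = -(1 / (2 * h)) * ‖x‖ ^ 2 := fun x => by ring
    unfold gaussKernel
    simp only [e]
    have e2 : (2 : ℝ) • innerSL ℝ x = (2 : ℕ) • innerSL ℝ x := by rw [two_smul, two_smul]
    rw [e2]
    exact h2
  rw [hd.fderiv, norm_smul, norm_smul, norm_smul, norm_smul, innerSL_apply_norm,
    Real.norm_of_nonneg (by positivity : 0 ≤ (2 * π * h) ^ (-(d : ℝ) / 2)),
    Real.norm_of_nonneg (Real.exp_pos _).le, norm_neg,
    Real.norm_of_nonneg (by positivity : 0 ≤ 1 / (2 * h)), Real.norm_ofNat]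
  refine mul_le_mul_of_nonneg_left ?_ (by positivity)
  set q := ‖x‖ ^ 2 / (2 * h) with hq
  have hq0 : 0 ≤ q := by positivity
  -- `2‖x‖ ≤ 1 + ‖x‖²` reduces the bound to `q e^{-q} ≤ 1`.
  have h1 : 1 / (2 * h) * (2 * ‖x‖) ≤ 1 / (2 * h) + q := by
    have : 1 / (2 * h) + q = 1 / (2 * h) * (1 + ‖x‖ ^ 2) := by rw [hq]; ring
    rw [this]
    gcongr
    nlinarith [sq_nonneg (‖x‖ - 1)]
  have h2 : Real.exp (-q) * q ≤ 1 := by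
    rw [Real.exp_neg, inv_mul_le_iff₀ (Real.exp_pos q), mul_one]
    linarith [Real.add_one_le_exp q]
  have h3 : Real.exp (-q) ≤ 1 := Real.exp_le_one_iff.2 (by linarith)
  rw [neg_div, ← hq]
  calc Real.exp (-q) * (1 / (2 * h) * (2 * ‖x‖)) ≤ Real.exp (-q) * (1 / (2 * h) + q) := by gcongr
    _ = Real.exp (-q) * (1 / (2 * h)) + Real.exp (-q) * q := by ring
    _ ≤ 1 * (1 / (2 * h)) + 1 := by gcongr
    _ = _ := by ring

end Gaussian

/-! ### Fisher information -/

lemma mul_sq_norm_gradient_log {d : ℕ} {f : EuclideanSpace ℝ (Fin d) → ℝ}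
    {z : EuclideanSpace ℝ (Fin d)} (hf : DifferentiableAt ℝ f z) (hz : 0 < f z) :
    f z * ‖gradient (fun w => Real.log (f w)) z‖ ^ 2 = ‖fderiv ℝ f z‖ ^ 2 / f z := by
  rw [gradient, LinearIsometryEquiv.norm_map, fderiv.log hf hz.ne', norm_smul,
    Real.norm_of_nonneg (inv_pos.2 hz).le]
  field_simp

/-- decay of the Fisher information along the OU flow.
`∫ p_t ‖∇ log p_t‖² ≤ (1/(1-h(t))) ∫ p₀ ‖∇ log p₀‖²`. -/
theorem fisher_information_decay
    (d : ℕ) (p₀ : EuclideanSpace ℝ (Fin d) → ℝ)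
    (hpos : ∀ z, 0 < p₀ z)
    (hsmooth : ContDiff ℝ 1 p₀)
    (hprob : ∫ z, p₀ z = 1)
    (hfisher : Integrable (fun z : EuclideanSpace ℝ (Fin d) =>
      p₀ z * ‖gradient (fun w => Real.log (p₀ w)) z‖ ^ 2))
    (B C₁ C₂ : ℝ) (hB : 0 < B) (hC₁ : 0 < C₁) (hC₂ : 0 < C₂)
    (htail : ∀ z : EuclideanSpace ℝ (Fin d), B ≤ ‖z‖ →
      p₀ z ≤ (2 * π) ^ (-(d : ℝ) / 2) * C₁ * Real.exp (-C₂ * ‖z‖ ^ 2 / 2))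
    (pt : ℝ → EuclideanSpace ℝ (Fin d) → ℝ)
    (hpt : ∀ t z, pt t z = ∫ z₀, p₀ z₀ * phiT t z z₀)
    (t : ℝ) (ht : 0 < t) :
    ∫ z, pt t z * ‖gradient (fun w => Real.log (pt t w)) z‖ ^ 2 ≤
      (1 / (1 - hfun t)) *
        ∫ z, p₀ z * ‖gradient (fun w => Real.log (p₀ w)) z‖ ^ 2 := by

  have hh : 0 < hfun t := by
    unfold hfun; linarith [Real.exp_lt_one_iff.2 (by linarith : -t < 0)]
  have h1 : 0 < 1 - hfun t := by unfold hfun; linarith [Real.exp_pos (-t)]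
  set a := Real.sqrt (1 - hfun t) with ha_def
  have ha : 0 < a := Real.sqrt_pos.2 h1
  have ha2 : a ^ 2 = 1 - hfun t := Real.sq_sqrt h1.le
  have hp : Integrable p₀ := by
    by_contra h
    rw [integral_undef h] at hprob
    exact zero_ne_one hprob
  have hlog : ∀ z, p₀ z * ‖gradient (fun w => Real.log (p₀ w)) z‖ ^ 2
      = ‖fderiv ℝ p₀ z‖ ^ 2 / p₀ z := fun z =>
    mul_sq_norm_gradient_log (hsmooth.differentiable one_ne_zero z) (hpos z)
  simp only [hlog] at hfisher ⊢
  have hptK : pt t = fun w => ∫ y, p₀ y * gaussKernel d (hfun t) (w - a • y) :=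
    funext fun w => hpt t w
  have hK := contDiff_gaussKernel (d := d) (h := hfun t)
  have hK0 := gaussKernel_pos (d := d) hh
  have hKb := gaussKernel_le (d := d) hh
  have hKd := norm_fderiv_gaussKernel_le (d := d) hh
  obtain ⟨hGi, hG⟩ := integral_integral_kernel_mul (a := a) hK.continuous hK0
    (integral_gaussKernel hh) hfisher
  have hptpos : ∀ z, 0 < pt t z := fun z => by
    rw [hptK]; exact smoothing_pos_s12 hp hpos hK.continuous hK0 hKb z
  rw [← hG, ← ha2, ← integral_const_mul]
  refine integral_mono_of_nonneg (.of_forall fun z => ?_) (hGi.const_mul _) (.of_forall fun z => ?_)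
  · exact mul_nonneg (hptpos z).le (sq_nonneg _)
  · have hd : DifferentiableAt ℝ (pt t) z := by
      rw [hptK]
      exact (hasFDerivAt_smoothing hp hpos hK hK0 hKb hKd z).differentiableAt
    simp only
    rw [mul_sq_norm_gradient_log hd (hptpos z), hptK]
    exact sq_norm_fderiv_smoothing_div_le ha hp hpos hsmooth hfisher hK hK0 hKb hKd z
end

section
/- Let p₀ be a positive, continuously differentiable probability density on ℝ^d with finite second moment and sub-Gaussian tails, let M₀ = ∫ z zᵀ p₀(z) dz, and for t > 0 let p_t(z) = ∫ p₀(z₀) φ_t(z|z₀) dz₀, where φ_t(z|z₀) is the Gaussian density with mean √(1−h(t)) z₀ and covariance h(t) I_d. Define g(z, t) = h(t) ∇ log p_t(z) + z. Then in the Loewner (positive semidefinite) order, ∫ p_t(z) g(z,t) g(z,t)ᵀ dz ⪰ (1 − h(t)) M₀ − h(t) I_d. -/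
/-!
Let `Z = a Y + √s ξ` with `Y ∼ p₀`, `a = √(1-h)`, `s = h`, and `ξ` an independent standard
Gaussian, so that `Z ∼ p_t`. By Tweedie's formula (`tweedie`), `g(Z) = E[a Y | Z]`.

Fix a direction `v` and put `X = ⟨v, a Y⟩`. The conditional variance of `X` given `Z` is at most the
conditional mean square distance from `X` to any function of `Z`; choosing `⟨v, Z⟩` gives, pointwise
in `z`, `E[X² | Z] - ⟨v, g(Z)⟩² ≤ E[(⟨v, Z⟩ - X)² | Z]` (`posterior_bounds`). Integrating over `z`
with Fubini (`integral_integral_mul_sub_smul`) gives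
`(1-h) vᵀ M₀ v - E ⟨v, g(Z)⟩² ≤ E ⟨v, √s ξ⟩² = h ‖v‖²`, where the Gaussian second moment comes from
integration by parts (`integral_inner_sq_gaussDensity`). The case `⟨v, g⟩² ≤ E[X² | Z]` of Jensen's
inequality supplies integrability of `p_t ⟨v, g⟩²`.
-/

open MeasureTheory Real Matrix

/-! ### Moments of the Gaussian density -/

/-- The centred Gaussian density on `ℝ^d` with covariance `s I_d`. -/
noncomputable def gaussDensity {d : ℕ} (s : ℝ) (u : EuclideanSpace ℝ (Fin d)) : ℝ :=
  (2 * Real.pi * s) ^ (-(d : ℝ) / 2) * Real.exp (-‖u‖ ^ 2 / (2 * s))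

lemma gaussDensity_pos {d : ℕ} {s : ℝ} (hs : 0 < s) (u : EuclideanSpace ℝ (Fin d)) :
    0 < gaussDensity s u := by
  unfold gaussDensity; positivity

lemma continuous_gaussDensity {d : ℕ} (s : ℝ) :
    Continuous (gaussDensity s : EuclideanSpace ℝ (Fin d) → ℝ) := by
  unfold gaussDensity; fun_prop

lemma integral_gaussDensity {d : ℕ} {s : ℝ} (hs : 0 < s) :
    ∫ u : EuclideanSpace ℝ (Fin d), gaussDensity s u = 1 := by
  unfold gaussDensity
  rw [integral_const_mul]
  have h1 := GaussianFourier.integral_rexp_neg_mul_sq_norm (V := EuclideanSpace ℝ (Fin d))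
    (b := 1 / (2 * s)) (by positivity)
  have h2 : ∀ u : EuclideanSpace ℝ (Fin d),
      -‖u‖ ^ 2 / (2 * s) = -(1 / (2 * s)) * ‖u‖ ^ 2 := fun u => by ring
  simp_rw [h2]
  rw [h1, show π / (1 / (2 * s)) = 2 * π * s by field_simp, finrank_euclideanSpace,
    Fintype.card_fin, ← Real.rpow_add (by positivity)]
  rw [show -(d : ℝ) / 2 + d / 2 = 0 by ring, Real.rpow_zero]

lemma integrable_gaussDensity {d : ℕ} {s : ℝ} (hs : 0 < s) :
    Integrable (gaussDensity s : EuclideanSpace ℝ (Fin d) → ℝ) :=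
  .of_integral_ne_zero (by rw [integral_gaussDensity hs]; exact one_ne_zero)

lemma gaussDensity_le {d : ℕ} {s : ℝ} (hs : 0 < s) (u : EuclideanSpace ℝ (Fin d)) :
    gaussDensity s u ≤ (2 * Real.pi * s) ^ (-(d : ℝ) / 2) := by
  unfold gaussDensity
  refine mul_le_of_le_one_right (by positivity) (Real.exp_le_one_iff.2 ?_)
  have : 0 ≤ ‖u‖ ^ 2 / (2 * s) := by positivity
  rw [neg_div]; linarith

/-- `‖u‖² e^{-‖u‖²/(2s)} ≤ 4s e^{-‖u‖²/(4s)}`, since `x ≤ e^x` at `x = ‖u‖²/(4s)`. -/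
lemma normSq_mul_exp_le {d : ℕ} {s : ℝ} (hs : 0 < s) (u : EuclideanSpace ℝ (Fin d)) :
    ‖u‖ ^ 2 * Real.exp (-‖u‖ ^ 2 / (2 * s)) ≤
      4 * s * Real.exp (-‖u‖ ^ 2 / (2 * (2 * s))) := by
  have h1 : ‖u‖ ^ 2 / (4 * s) ≤ Real.exp (‖u‖ ^ 2 / (4 * s)) := by
    linarith [Real.add_one_le_exp (‖u‖ ^ 2 / (4 * s))]
  have h2 : Real.exp (-‖u‖ ^ 2 / (2 * (2 * s))) =
      Real.exp (‖u‖ ^ 2 / (4 * s)) * Real.exp (-‖u‖ ^ 2 / (2 * s)) := by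
    rw [← Real.exp_add]; congr 1; field_simp; ring
  have h3 : ‖u‖ ^ 2 = 4 * s * (‖u‖ ^ 2 / (4 * s)) := by field_simp
  rw [h2, ← mul_assoc]
  refine mul_le_mul_of_nonneg_right ?_ (Real.exp_pos _).le
  calc ‖u‖ ^ 2 = 4 * s * (‖u‖ ^ 2 / (4 * s)) := h3
    _ ≤ _ := mul_le_mul_of_nonneg_left h1 (by positivity)

lemma integrable_normSq_mul_gaussDensity {d : ℕ} {s : ℝ} (hs : 0 < s) :
    Integrable (fun u : EuclideanSpace ℝ (Fin d) => ‖u‖ ^ 2 * gaussDensity s u) := by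
  have hc : ∀ r : ℝ, 0 < r → Integrable
      (fun u : EuclideanSpace ℝ (Fin d) => Real.exp (-‖u‖ ^ 2 / (2 * r))) := by
    intro r hr
    have hne : (2 * Real.pi * r) ^ (-(d : ℝ) / 2) ≠ 0 := by positivity
    exact (integrable_const_mul_iff (IsUnit.mk0 _ hne) _).1 (integrable_gaussDensity hr)
  have h := ((hc (2 * s) (by positivity)).const_mul (4 * s)).mono'
    (f := fun u : EuclideanSpace ℝ (Fin d) => ‖u‖ ^ 2 * Real.exp (-‖u‖ ^ 2 / (2 * s)))
    (by fun_prop) (Filter.Eventually.of_forall fun u => by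
      rw [Real.norm_of_nonneg (by positivity)]; exact normSq_mul_exp_le hs u)
  refine (h.const_mul ((2 * Real.pi * s) ^ (-(d : ℝ) / 2))).congr
    (Filter.Eventually.of_forall fun u => ?_)
  simp only [gaussDensity]; ring

lemma norm_mul_gaussDensity_le {d : ℕ} {s : ℝ} (hs : 0 < s) (u : EuclideanSpace ℝ (Fin d)) :
    ‖u‖ * gaussDensity s u ≤ (2 * Real.pi * s) ^ (-(d : ℝ) / 2) * (1 + 4 * s) := by
  unfold gaussDensity
  have h1 := normSq_mul_exp_le hs u
  have h2 : ∀ r : ℝ, 0 < r → Real.exp (-‖u‖ ^ 2 / (2 * r)) ≤ 1 := fun r hr =>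
    Real.exp_le_one_iff.2 (by
      have : 0 ≤ ‖u‖ ^ 2 / (2 * r) := by positivity
      rw [neg_div]; linarith)
  have h3 : ‖u‖ * Real.exp (-‖u‖ ^ 2 / (2 * s)) ≤ 1 + 4 * s := by
    have h4 : ‖u‖ ≤ 1 + ‖u‖ ^ 2 := by nlinarith [sq_nonneg (‖u‖ - 1), norm_nonneg u]
    have h5 := mul_le_mul_of_nonneg_right h4 (Real.exp_pos (-‖u‖ ^ 2 / (2 * s))).le
    have h6 := mul_le_mul_of_nonneg_left (h2 (2 * s) (by positivity))
      (show 0 ≤ 4 * s by positivity)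
    linarith [h2 s hs]
  calc _ = (2 * Real.pi * s) ^ (-(d : ℝ) / 2) * (‖u‖ * Real.exp (-‖u‖ ^ 2 / (2 * s))) := by ring
    _ ≤ _ := mul_le_mul_of_nonneg_left h3 (by positivity)

lemma hasFDerivAt_gaussDensity {d : ℕ} {s : ℝ} (hs : 0 < s) (u : EuclideanSpace ℝ (Fin d)) :
    HasFDerivAt (gaussDensity s) ((-(gaussDensity s u / s)) • innerSL ℝ u) u := by
  have h1 := (((hasFDerivAt_id (𝕜 := ℝ) u).norm_sq.neg.mul_const ((2 * s)⁻¹)).exp).const_mul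
    ((2 * Real.pi * s) ^ (-(d : ℝ) / 2))
  convert! h1 using 1
  ext v
  simp [gaussDensity]
  field_simp

/-- `∫ ⟨v,u⟩² γ_s(u) du = s ‖v‖²`, by integrating by parts against
`∂_v γ_s = -⟨v,u⟩ γ_s / s`. -/
lemma integral_inner_sq_gaussDensity {d : ℕ} {s : ℝ} (hs : 0 < s)
    (v : EuclideanSpace ℝ (Fin d)) :
    Integrable (fun u => inner ℝ v u ^ 2 * gaussDensity s u) ∧
    ∫ u, inner ℝ v u ^ 2 * gaussDensity s u = s * ‖v‖ ^ 2 := by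
  have hcg := continuous_gaussDensity (d := d) s
  have hi2 : Integrable (fun u => inner ℝ v u ^ 2 * gaussDensity s u) := by
    refine ((integrable_normSq_mul_gaussDensity (d := d) hs).const_mul (‖v‖ ^ 2)).mono'
      (by fun_prop) (Filter.Eventually.of_forall fun u => ?_)
    rw [Real.norm_of_nonneg (mul_nonneg (sq_nonneg _) (gaussDensity_pos hs u).le), ← mul_assoc,
      ← mul_pow]
    refine mul_le_mul_of_nonneg_right ?_ (gaussDensity_pos hs u).le
    rw [← sq_abs]
    exact pow_le_pow_left₀ (abs_nonneg _) (abs_real_inner_le_norm v u) 2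
  have hi1 : Integrable (fun u => inner ℝ v u * gaussDensity s u) := by
    refine (hi2.add (integrable_gaussDensity hs)).mono'
      (by fun_prop) (Filter.Eventually.of_forall fun u => ?_)
    have hg := gaussDensity_pos hs u
    rw [norm_mul, Real.norm_of_nonneg hg.le, Real.norm_eq_abs]
    have : |inner ℝ v u| ≤ inner ℝ v u ^ 2 + 1 := by
      rw [← sq_abs (inner ℝ v u)]; nlinarith [sq_nonneg (|inner ℝ v u| - 1)]
    simp only [Pi.add_apply]
    nlinarith
  refine ⟨hi2, ?_⟩
  have hf : ∀ u, HasFDerivAt (fun u => inner ℝ v u) (innerSL ℝ v) u := fun u =>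
    (innerSL ℝ v).hasFDerivAt
  have hdg : ∀ u, fderiv ℝ (gaussDensity s) u v = -(s⁻¹ * (inner ℝ v u * gaussDensity s u)) := by
    intro u
    rw [(hasFDerivAt_gaussDensity hs u).fderiv]
    simp [real_inner_comm]
    ring
  have key := integral_mul_fderiv_eq_neg_fderiv_mul_of_integrable (μ := volume)
    (f := fun u => inner ℝ v u) (g := gaussDensity (d := d) s) (v := v)
    (by
      simp only [(hf _).fderiv]
      exact (integrable_gaussDensity hs).const_mul _)
    (by
      simp only [hdg]
      refine (hi2.const_mul (-s⁻¹)).congr (Filter.Eventually.of_forall fun u => ?_)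
      simp only; ring)
    hi1 (fun u _ => (hf u).differentiableAt)
    (fun u _ => (hasFDerivAt_gaussDensity hs u).differentiableAt)
  simp only [hdg, (hf _).fderiv] at key
  rw [integral_const_mul, integral_gaussDensity hs, mul_one] at key
  have h2 : ∀ u : EuclideanSpace ℝ (Fin d), inner ℝ v u * -(s⁻¹ * (inner ℝ v u * gaussDensity s u))
      = -s⁻¹ * (inner ℝ v u ^ 2 * gaussDensity s u) := fun u => by ring
  simp_rw [h2] at key
  rw [integral_const_mul] at key
  simp only [innerSL_apply_apply, real_inner_self_eq_norm_sq] at key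
  field_simp at key
  linarith

/-! ### The noised density and its posterior mean -/

/-- Fubini for the kernel `(z, y) ↦ w(y) k(z - a y)`: translation invariance in `z` separates the
two factors. -/
lemma integral_integral_mul_sub_smul {d : ℕ} {w k : EuclideanSpace ℝ (Fin d) → ℝ} (a : ℝ)
    (hw : Continuous w) (hk : Continuous k)
    (hwi : Integrable w) (hki : Integrable k) :
    Integrable (fun x : EuclideanSpace ℝ (Fin d) × EuclideanSpace ℝ (Fin d) =>
      w x.2 * k (x.1 - a • x.2)) (volume.prod volume) ∧
    ∫ z, ∫ y, w y * k (z - a • y) = (∫ y, w y) * ∫ u, k u := by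
  have hint : Integrable (fun x : EuclideanSpace ℝ (Fin d) × EuclideanSpace ℝ (Fin d) =>
      w x.2 * k (x.1 - a • x.2)) (volume.prod volume) := by
    refine (integrable_prod_iff' ?_).2 ⟨Filter.Eventually.of_forall fun y => ?_, ?_⟩
    · exact Continuous.aestronglyMeasurable (by fun_prop)
    · exact (hki.comp_sub_right (a • y)).const_mul (w y)
    · simp only [norm_mul, integral_const_mul]
      simp_rw [integral_sub_right_eq_self (fun u => ‖k u‖)]
      exact hwi.norm.mul_const _
  refine ⟨hint, ?_⟩
  rw [integral_integral_swap (f := fun z y => w y * k (z - a • y)) hint]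
  simp_rw [integral_const_mul, integral_sub_right_eq_self k, integral_mul_const]

/-- The joint weight `q(z, y) = p(y) γ_s(z - a y)`, as a function of `y`, integrates every
function of at most quadratic growth. -/
lemma integrable_joint_mul {d : ℕ} {p : EuclideanSpace ℝ (Fin d) → ℝ} (hp : ∀ y, 0 < p y)
    (hpc : Continuous p) (hpi : Integrable p) (hp2 : Integrable (fun y => p y * ‖y‖ ^ 2))
    {s : ℝ} (hs : 0 < s) (a : ℝ) (z : EuclideanSpace ℝ (Fin d))
    {f : EuclideanSpace ℝ (Fin d) → ℝ} (hf : Continuous f) (C : ℝ)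
    (hfC : ∀ y, |f y| ≤ C * (1 + ‖y‖ ^ 2)) :
    Integrable (fun y => p y * gaussDensity s (z - a • y) * f y) := by
  have hcg := continuous_gaussDensity (d := d) s
  refine ((hpi.add hp2).const_mul ((2 * Real.pi * s) ^ (-(d : ℝ) / 2) * C)).mono'
    (by fun_prop) (Filter.Eventually.of_forall fun y => ?_)
  have hg := gaussDensity_pos hs (z - a • y)
  have hgl := gaussDensity_le hs (z - a • y)
  rw [norm_mul, Real.norm_of_nonneg (mul_nonneg (hp y).le hg.le), Real.norm_eq_abs]
  calc p y * gaussDensity s (z - a • y) * |f y|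
      ≤ p y * (2 * Real.pi * s) ^ (-(d : ℝ) / 2) * (C * (1 + ‖y‖ ^ 2)) := by
        have := (hp y).le
        have := hfC y
        gcongr
    _ = _ := by simp only [Pi.add_apply]; ring

lemma abs_inner_le_quadratic {d : ℕ} (v y : EuclideanSpace ℝ (Fin d)) :
    |inner ℝ v y| ≤ ‖v‖ * (1 + ‖y‖ ^ 2) := by
  refine (abs_real_inner_le_norm v y).trans (mul_le_mul_of_nonneg_left ?_ (norm_nonneg v))
  nlinarith [sq_nonneg (‖y‖ - 1)]

lemma inner_sq_le_quadratic {d : ℕ} (v y : EuclideanSpace ℝ (Fin d)) :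
    inner ℝ v y ^ 2 ≤ ‖v‖ ^ 2 * ‖y‖ ^ 2 := by
  rw [← sq_abs, ← mul_pow]
  exact pow_le_pow_left₀ (abs_nonneg _) (abs_real_inner_le_norm v y) 2

/-- The noised density `z ↦ ∫ p(y) γ_s(z - a y) dy`, the law of `a Y + √s ξ` with `Y ∼ p` and
`ξ` a standard Gaussian. -/
noncomputable def noised {d : ℕ} (p : EuclideanSpace ℝ (Fin d) → ℝ) (s a : ℝ)
    (z : EuclideanSpace ℝ (Fin d)) : ℝ :=
  ∫ y, p y * gaussDensity s (z - a • y)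

lemma noised_pos {d : ℕ} {p : EuclideanSpace ℝ (Fin d) → ℝ} (hp : ∀ y, 0 < p y)
    (hpc : Continuous p) (hpi : Integrable p) (hp2 : Integrable (fun y => p y * ‖y‖ ^ 2))
    {s : ℝ} (hs : 0 < s) (a : ℝ) (z : EuclideanSpace ℝ (Fin d)) : 0 < noised p s a z := by
  have hpos : ∀ y, 0 < p y * gaussDensity s (z - a • y) := fun y =>
    mul_pos (hp y) (gaussDensity_pos hs _)
  have hi : Integrable (fun y => p y * gaussDensity s (z - a • y)) := by
    simpa using integrable_joint_mul hp hpc hpi hp2 hs a z (f := fun _ => 1) continuous_const 1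
      (fun y => by simp)
  refine (integral_pos_iff_support_of_nonneg (fun y => (hpos y).le) hi).2 ?_
  have : Function.support (fun y => p y * gaussDensity s (z - a • y)) = Set.univ :=
    Set.eq_univ_of_forall fun y => (hpos y).ne'
  rw [this]
  exact Measure.measure_univ_pos.2 (NeZero.ne _)

/-- Differentiation under the integral sign; `‖u‖ γ_s(u)` is bounded, so `p` itself dominates. -/
lemma hasFDerivAt_noised {d : ℕ} {p : EuclideanSpace ℝ (Fin d) → ℝ} (hp : ∀ y, 0 < p y)
    (hpc : Continuous p) (hpi : Integrable p) (hp2 : Integrable (fun y => p y * ‖y‖ ^ 2))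
    {s : ℝ} (hs : 0 < s) (a : ℝ) (z : EuclideanSpace ℝ (Fin d)) :
    ∃ D : EuclideanSpace ℝ (Fin d) →L[ℝ] ℝ, HasFDerivAt (noised p s a) D z ∧
      ∀ v, D v = ∫ y, p y * gaussDensity s (z - a • y) * (-s⁻¹ * inner ℝ (z - a • y) v) := by
  have hcg := continuous_gaussDensity (d := d) s
  set F' : EuclideanSpace ℝ (Fin d) → EuclideanSpace ℝ (Fin d) →
      (EuclideanSpace ℝ (Fin d) →L[ℝ] ℝ) := fun z y =>
    p y • ((-(gaussDensity s (z - a • y) / s)) • innerSL ℝ (z - a • y)) with hF'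
  have hi : Integrable (fun y => p y * gaussDensity s (z - a • y)) := by
    simpa using integrable_joint_mul hp hpc hpi hp2 hs a z (f := fun _ => 1) continuous_const 1
      (fun y => by simp)
  have hF'm : ∀ z, AEStronglyMeasurable (F' z) volume := fun z =>
    Continuous.aestronglyMeasurable (by simp only [hF']; fun_prop)
  have hbound : ∀ z y, ‖F' z y‖ ≤
      ((2 * Real.pi * s) ^ (-(d : ℝ) / 2) * (1 + 4 * s) / s) * p y := by
    intro z y
    have hg := gaussDensity_pos hs (z - a • y)
    have h1 := norm_mul_gaussDensity_le hs (z - a • y)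
    simp only [hF']
    rw [norm_smul, norm_smul, norm_neg, Real.norm_of_nonneg (hp y).le,
      Real.norm_of_nonneg (div_pos hg hs).le, innerSL_apply_norm, mul_comm]
    refine mul_le_mul_of_nonneg_right ?_ (hp y).le
    rw [div_mul_eq_mul_div, mul_comm (gaussDensity _ _)]
    gcongr
  have hdom : Integrable (fun y => ((2 * Real.pi * s) ^ (-(d : ℝ) / 2) * (1 + 4 * s) / s) * p y) :=
    hpi.const_mul _
  have hder := hasFDerivAt_integral_of_dominated_of_fderiv_le (μ := volume) (𝕜 := ℝ)
    (F := fun z y => p y * gaussDensity s (z - a • y)) (F' := F') (x₀ := z) (s := Set.univ)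
    Filter.univ_mem
    (Filter.Eventually.of_forall fun z => Continuous.aestronglyMeasurable (by fun_prop))
    hi (hF'm z) (Filter.Eventually.of_forall fun y z _ => hbound z y) hdom
    (Filter.Eventually.of_forall fun y z _ => by
      have h1 := (hasFDerivAt_gaussDensity hs (z - a • y)).comp z
        ((hasFDerivAt_id (𝕜 := ℝ) z).sub_const (a • y))
      rw [ContinuousLinearMap.comp_id] at h1
      exact h1.const_mul (p y))
  refine ⟨_, hder, fun v => ?_⟩
  rw [ContinuousLinearMap.integral_apply
    (hdom.mono' (hF'm z) (Filter.Eventually.of_forall fun y => hbound z y))]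
  refine integral_congr_ae (Filter.Eventually.of_forall fun y => ?_)
  simp only [hF', _root_.smul_apply, innerSL_apply_apply, smul_eq_mul]
  ring

/-- Tweedie's formula: `s ∇ log P + z` is the posterior mean of `a Y` given the noised value `z`. -/
lemma tweedie {d : ℕ} {p : EuclideanSpace ℝ (Fin d) → ℝ} (hp : ∀ y, 0 < p y)
    (hpc : Continuous p) (hpi : Integrable p) (hp2 : Integrable (fun y => p y * ‖y‖ ^ 2))
    {s : ℝ} (hs : 0 < s) (a : ℝ) (z v : EuclideanSpace ℝ (Fin d)) :
    inner ℝ v (s • gradient (fun w => Real.log (noised p s a w)) z + z) * noised p s a z =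
      ∫ y, p y * gaussDensity s (z - a • y) * inner ℝ v (a • y) := by
  obtain ⟨D, hD, hDv⟩ := hasFDerivAt_noised hp hpc hpi hp2 hs a z
  have hP := noised_pos hp hpc hpi hp2 hs a z
  have h1 : inner ℝ v (gradient (fun w => Real.log (noised p s a w)) z) =
      (noised p s a z)⁻¹ * D v := by
    rw [real_inner_comm, ← InnerProductSpace.toDual_apply_apply (𝕜 := ℝ), toDual_gradient,
      (hD.log hP.ne').fderiv]
    simp
  have h2 : noised p s a z * inner ℝ v z =
      ∫ y, p y * gaussDensity s (z - a • y) * inner ℝ v z := by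
    rw [integral_mul_const]; rfl
  have hc : ∀ c, Integrable (fun y => p y * gaussDensity s (z - a • y) * c) := fun c =>
    integrable_joint_mul hp hpc hpi hp2 hs a z continuous_const |c|
      (fun y => by nlinarith [mul_nonneg (abs_nonneg c) (sq_nonneg ‖y‖)])
  have hl : Integrable (fun y => p y * gaussDensity s (z - a • y) * inner ℝ v (a • y)) :=
    integrable_joint_mul hp hpc hpi hp2 hs a z (by fun_prop) (|a| * ‖v‖) (fun y => by
      rw [inner_smul_right, abs_mul, mul_assoc]
      exact mul_le_mul_of_nonneg_left (abs_inner_le_quadratic v y) (abs_nonneg a))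
  have h3 : s * D v = (∫ y, p y * gaussDensity s (z - a • y) * inner ℝ v (a • y)) -
      ∫ y, p y * gaussDensity s (z - a • y) * inner ℝ v z := by
    rw [hDv, ← integral_const_mul, ← integral_sub hl (hc _)]
    refine integral_congr_ae (Filter.Eventually.of_forall fun y => ?_)
    simp only
    rw [real_inner_comm, inner_sub_right]
    field_simp
    ring
  rw [inner_add_right, inner_smul_right, h1]
  field_simp
  rw [h3, h2]
  ring

/-- The conditional-variance inequalities at a fixed `z`. With `X = ⟨v, aY⟩` and posterior
mean `m`, they say `m² ≤ E[X²]` and `Var X ≤ E[(X - c)²]` for `c = ⟨v,z⟩`, each multiplied by the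
mass `P(z)`. -/
lemma posterior_bounds {d : ℕ} {p : EuclideanSpace ℝ (Fin d) → ℝ} (hp : ∀ y, 0 < p y)
    (hpc : Continuous p) (hpi : Integrable p) (hp2 : Integrable (fun y => p y * ‖y‖ ^ 2))
    {s : ℝ} (hs : 0 < s) (a : ℝ) (z v : EuclideanSpace ℝ (Fin d)) (m : ℝ)
    (hm : m * noised p s a z = ∫ y, p y * gaussDensity s (z - a • y) * inner ℝ v (a • y)) :
    noised p s a z * m ^ 2 ≤
      ∫ y, p y * gaussDensity s (z - a • y) * inner ℝ v (a • y) ^ 2 ∧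
    (∫ y, p y * gaussDensity s (z - a • y) * inner ℝ v (a • y) ^ 2) -
      (∫ y, p y * gaussDensity s (z - a • y) * inner ℝ v (z - a • y) ^ 2) ≤
        noised p s a z * m ^ 2 := by
  have hP := noised_pos hp hpc hpi hp2 hs a z
  have hc : ∀ c, Integrable (fun y => p y * gaussDensity s (z - a • y) * c) := fun c =>
    integrable_joint_mul hp hpc hpi hp2 hs a z continuous_const |c|
      (fun y => by nlinarith [mul_nonneg (abs_nonneg c) (sq_nonneg ‖y‖)])
  have hl : Integrable (fun y => p y * gaussDensity s (z - a • y) * inner ℝ v (a • y)) :=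
    integrable_joint_mul hp hpc hpi hp2 hs a z (by fun_prop) (|a| * ‖v‖) (fun y => by
      rw [inner_smul_right, abs_mul, mul_assoc]
      exact mul_le_mul_of_nonneg_left (abs_inner_le_quadratic v y) (abs_nonneg a))
  have hq : Integrable (fun y => p y * gaussDensity s (z - a • y) * inner ℝ v (a • y) ^ 2) :=
    integrable_joint_mul hp hpc hpi hp2 hs a z (by fun_prop) (a ^ 2 * ‖v‖ ^ 2) (fun y => by
      rw [inner_smul_right, abs_of_nonneg (sq_nonneg _), mul_pow, mul_assoc]
      refine mul_le_mul_of_nonneg_left ?_ (sq_nonneg a)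
      nlinarith [inner_sq_le_quadratic v y, sq_nonneg ‖v‖])
  -- expansion of the posterior second moment about an arbitrary centre `c`
  have hexp : ∀ c : ℝ, ∫ y, p y * gaussDensity s (z - a • y) * (c - inner ℝ v (a • y)) ^ 2 =
      (∫ y, p y * gaussDensity s (z - a • y) * inner ℝ v (a • y) ^ 2) -
        2 * c * (m * noised p s a z) + noised p s a z * c ^ 2 := by
    intro c
    have hql : Integrable (fun y => p y * gaussDensity s (z - a • y) * inner ℝ v (a • y) ^ 2 -
        2 * c * (p y * gaussDensity s (z - a • y) * inner ℝ v (a • y))) :=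
      hq.sub (hl.const_mul _)
    rw [hm, ← integral_const_mul, ← integral_sub hq (hl.const_mul _), noised,
      ← integral_mul_const, ← integral_add hql (hc _)]
    refine integral_congr_ae (Filter.Eventually.of_forall fun y => ?_)
    simp only
    ring
  constructor
  · have h0 : 0 ≤ ∫ y, p y * gaussDensity s (z - a • y) * (m - inner ℝ v (a • y)) ^ 2 :=
      integral_nonneg fun y =>
        mul_nonneg (mul_nonneg (hp y).le (gaussDensity_pos hs _).le) (sq_nonneg _)
    rw [hexp] at h0
    nlinarith
  · simp_rw [inner_sub_right v z]
    rw [hexp]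
    nlinarith [mul_nonneg hP.le (sq_nonneg (inner ℝ v z - m))]

/-- The bound along a single direction `v`. -/
lemma directional_bound {d : ℕ} {p : EuclideanSpace ℝ (Fin d) → ℝ} (hp : ∀ y, 0 < p y)
    (hpc : Continuous p) (hpi : Integrable p) (hp1 : ∫ y, p y = 1)
    (hp2 : Integrable (fun y => p y * ‖y‖ ^ 2))
    {s : ℝ} (hs : 0 < s) (a : ℝ) {G : EuclideanSpace ℝ (Fin d) → EuclideanSpace ℝ (Fin d)}
    (hG : ∀ z, G z = s • gradient (fun w => Real.log (noised p s a w)) z + z)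
    (hPm : Measurable (noised p s a)) (hGm : Measurable G) (v : EuclideanSpace ℝ (Fin d)) :
    Integrable (fun z => noised p s a z * inner ℝ v (G z) ^ 2) ∧
    a ^ 2 * (∫ y, p y * inner ℝ v y ^ 2) - s * ‖v‖ ^ 2 ≤
      ∫ z, noised p s a z * inner ℝ v (G z) ^ 2 := by
  have hcg := continuous_gaussDensity (d := d) s
  have hb := fun z => posterior_bounds hp hpc hpi hp2 hs a z v (inner ℝ v (G z))
    (by rw [hG]; exact tweedie hp hpc hpi hp2 hs a z v)
  have hpv : Integrable (fun y => p y * inner ℝ v (a • y) ^ 2) := by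
    refine (hp2.const_mul (a ^ 2 * ‖v‖ ^ 2)).mono' (by fun_prop)
      (Filter.Eventually.of_forall fun y => ?_)
    rw [Real.norm_of_nonneg (mul_nonneg (hp y).le (sq_nonneg _)), inner_smul_right, mul_pow]
    nlinarith [mul_le_mul_of_nonneg_left (inner_sq_le_quadratic v y)
      (mul_nonneg (hp y).le (sq_nonneg a))]
  obtain ⟨hgi, hge⟩ := integral_inner_sq_gaussDensity hs v
  obtain ⟨hA, hAe⟩ := integral_integral_mul_sub_smul a
    (w := fun y => p y * inner ℝ v (a • y) ^ 2) (k := gaussDensity s)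
    (by fun_prop) hcg hpv (integrable_gaussDensity hs)
  obtain ⟨hC, hCe⟩ := integral_integral_mul_sub_smul a
    (w := p) (k := fun u => inner ℝ v u ^ 2 * gaussDensity s u)
    hpc (by fun_prop) hpi hgi
  have e1 : ∀ z y, p y * inner ℝ v (a • y) ^ 2 * gaussDensity s (z - a • y) =
      p y * gaussDensity s (z - a • y) * inner ℝ v (a • y) ^ 2 := fun z y => by ring
  have e2 : ∀ z y, p y * (inner ℝ v (z - a • y) ^ 2 * gaussDensity s (z - a • y)) =
      p y * gaussDensity s (z - a • y) * inner ℝ v (z - a • y) ^ 2 := fun z y => by ring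
  have hA' := hA.integral_prod_left
  have hC' := hC.integral_prod_left
  simp only [e1] at hA' hAe
  simp only [e2] at hC' hCe
  have hint : Integrable (fun z => noised p s a z * inner ℝ v (G z) ^ 2) := by
    refine hA'.mono' (Measurable.aestronglyMeasurable (by fun_prop))
      (Filter.Eventually.of_forall fun z => ?_)
    rw [Real.norm_of_nonneg
      (mul_nonneg (noised_pos hp hpc hpi hp2 hs a z).le (sq_nonneg _))]
    exact (hb z).1
  refine ⟨hint, ?_⟩
  have hmono := integral_mono (hA'.sub hC') hint (fun z => (hb z).2)
  simp only [Pi.sub_apply] at hmono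
  rw [integral_sub hA' hC', hAe, hCe, hge, hp1, integral_gaussDensity hs] at hmono
  have e3 : ∫ y, p y * inner ℝ v (a • y) ^ 2 = a ^ 2 * ∫ y, p y * inner ℝ v y ^ 2 := by
    rw [← integral_const_mul]
    refine integral_congr_ae (Filter.Eventually.of_forall fun y => ?_)
    simp only [inner_smul_right]; ring
  rw [e3] at hmono
  linarith

/-! ### Matrices of second moments -/

/-- Coordinate products inherit integrability from squares, by `|ab| ≤ a² + b²`. -/
lemma integrable_coord_mul_s15 {d : ℕ} {w : EuclideanSpace ℝ (Fin d) → ℝ} (hw : ∀ z, 0 ≤ w z)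
    (hwm : Measurable w) {G : EuclideanSpace ℝ (Fin d) → EuclideanSpace ℝ (Fin d)}
    (hGm : Measurable G) (h : ∀ v, Integrable (fun z => w z * inner ℝ v (G z) ^ 2))
    (i j : Fin d) : Integrable (fun z => w z * G z i * G z j) := by
  have hi : ∀ i, Integrable (fun z => w z * G z i ^ 2) := fun i => by
    simpa [EuclideanSpace.inner_single_left] using h (EuclideanSpace.single i 1)
  have hGi : ∀ i, Measurable (fun z => G z i) := fun i => by fun_prop
  refine ((hi i).add (hi j)).mono'
    ((hwm.mul (hGi i)).mul (hGi j)).aestronglyMeasurable (Filter.Eventually.of_forall fun z => ?_)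
  rw [mul_assoc, norm_mul, Real.norm_of_nonneg (hw z)]
  simp only [Pi.add_apply]
  rw [← mul_add]
  refine mul_le_mul_of_nonneg_left ?_ (hw z)
  rw [Real.norm_eq_abs, abs_le]
  constructor <;> nlinarith [sq_nonneg (G z i + G z j), sq_nonneg (G z i - G z j)]

lemma quadForm_integral {d : ℕ} {w : EuclideanSpace ℝ (Fin d) → ℝ}
    {G : EuclideanSpace ℝ (Fin d) → EuclideanSpace ℝ (Fin d)}
    (h : ∀ i j, Integrable (fun z => w z * G z i * G z j)) (x : Fin d → ℝ) :
    x ⬝ᵥ (Matrix.of fun i j : Fin d => ∫ z, w z * G z i * G z j) *ᵥ x =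
      ∫ z, w z * inner ℝ (WithLp.toLp 2 x) (G z) ^ 2 := by
  have e : ∀ z, w z * inner ℝ (WithLp.toLp 2 x) (G z) ^ 2 =
      ∑ i, ∑ j, x i * x j * (w z * G z i * G z j) := by
    intro z
    simp only [PiLp.inner_apply, RCLike.inner_apply, conj_trivial]
    rw [sq, Finset.sum_mul_sum, Finset.mul_sum]
    simp_rw [Finset.mul_sum]
    refine Finset.sum_congr rfl fun i _ => Finset.sum_congr rfl fun j _ => by ring
  simp_rw [e]
  rw [integral_finsetSum _ fun i _ => integrable_finsetSum _ fun j _ => (h i j).const_mul _]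
  simp only [dotProduct, mulVec, Finset.mul_sum, Matrix.of_apply]
  refine Finset.sum_congr rfl fun i _ => ?_
  rw [integral_finsetSum _ fun j _ => (h i j).const_mul _]
  refine Finset.sum_congr rfl fun j _ => ?_
  rw [integral_const_mul]; ring

/-- Loewner lower bound on the second moment of
`g(z,t) = h(t) ∇ log p_t(z) + z`:
`∫ p_t g gᵀ ⪰ (1 - h(t)) M₀ - h(t) I_d` where `M₀ = ∫ z zᵀ p₀(z) dz`. -/
theorem g_second_moment_loewner_bound
    (d : ℕ) (p₀ : EuclideanSpace ℝ (Fin d) → ℝ)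
    (hpos : ∀ z, 0 < p₀ z)
    (hsmooth : ContDiff ℝ 1 p₀)
    (hprob : ∫ z, p₀ z = 1)
    (hmom2 : Integrable (fun z : EuclideanSpace ℝ (Fin d) => p₀ z * ‖z‖ ^ 2))
    (B C₁ C₂ : ℝ) (hB : 0 < B) (hC₁ : 0 < C₁) (hC₂ : 0 < C₂)
    (htail : ∀ z : EuclideanSpace ℝ (Fin d), B ≤ ‖z‖ →
      p₀ z ≤ (2 * π) ^ (-(d : ℝ) / 2) * C₁ * Real.exp (-C₂ * ‖z‖ ^ 2 / 2))
    (M₀ : Matrix (Fin d) (Fin d) ℝ)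
    (hM₀ : M₀ = Matrix.of fun i j => ∫ z : EuclideanSpace ℝ (Fin d), z i * z j * p₀ z)
    (pt : ℝ → EuclideanSpace ℝ (Fin d) → ℝ)
    (hpt : ∀ t z, pt t z = ∫ z₀, p₀ z₀ * phiT t z z₀)
    (g : EuclideanSpace ℝ (Fin d) → ℝ → EuclideanSpace ℝ (Fin d))
    (hg : ∀ z t, g z t = hfun t • gradient (fun w => Real.log (pt t w)) z + z)
    (t : ℝ) (ht : 0 < t) :
    ((Matrix.of fun i j : Fin d => ∫ z, pt t z * (g z t i) * (g z t j)) -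
        ((1 - hfun t) • M₀ - hfun t • (1 : Matrix (Fin d) (Fin d) ℝ))).PosSemidef := by
  have hs : 0 < hfun t := by
    have : Real.exp (-t) < 1 := by simpa using ht
    unfold hfun; linarith
  have h1s : 0 ≤ 1 - hfun t := by unfold hfun; linarith [Real.exp_pos (-t)]
  have hpc : Continuous p₀ := hsmooth.continuous
  have hpi : Integrable p₀ := .of_integral_ne_zero (by rw [hprob]; exact one_ne_zero)
  set a := Real.sqrt (1 - hfun t) with ha
  have ha2 : a ^ 2 = 1 - hfun t := Real.sq_sqrt h1s
  have hptn : pt t = noised p₀ (hfun t) a := funext fun z => hpt t z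
  have hG : ∀ z, g z t =
      hfun t • gradient (fun w => Real.log (noised p₀ (hfun t) a w)) z + z := fun z => by
    rw [hg, hptn]
  have hPm : Measurable (noised p₀ (hfun t) a) := by
    refine Continuous.measurable (continuous_iff_continuousAt.2 fun z => ?_)
    obtain ⟨D, hD, -⟩ := hasFDerivAt_noised hpos hpc hpi hmom2 hs a z
    exact hD.continuousAt
  have hGm : Measurable (fun z => g z t) := by
    simp only [hG]
    have : Measurable (gradient (fun w => Real.log (noised p₀ (hfun t) a w))) :=
      (InnerProductSpace.toDual ℝ (EuclideanSpace ℝ (Fin d))).symm.continuous.measurable.comp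
        (measurable_fderiv ℝ _)
    fun_prop
  have hdir := directional_bound hpos hpc hpi hprob hmom2 hs a hG hPm hGm
  have hcoord := integrable_coord_mul_s15
    (fun z => (noised_pos hpos hpc hpi hmom2 hs a z).le) hPm hGm (fun v => (hdir v).1)
  have hcoord0 : ∀ i j, Integrable
      (fun z : EuclideanSpace ℝ (Fin d) => p₀ z * (id z) i * (id z) j) := by
    refine integrable_coord_mul_s15 (fun z => (hpos z).le) hpc.measurable measurable_id fun v => ?_
    refine (hmom2.const_mul (‖v‖ ^ 2)).mono' (by fun_prop)
      (Filter.Eventually.of_forall fun y => ?_)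
    rw [Real.norm_of_nonneg (mul_nonneg (hpos y).le (sq_nonneg _)), id]
    nlinarith [mul_le_mul_of_nonneg_left (inner_sq_le_quadratic v y) (hpos y).le]
  have hM : M₀ = Matrix.of fun i j : Fin d =>
      ∫ z : EuclideanSpace ℝ (Fin d), p₀ z * (id z) i * (id z) j := by
    rw [hM₀]
    ext i j
    simp only [Matrix.of_apply, id]
    congr 1
    funext z
    ring
  refine Matrix.PosSemidef.of_dotProduct_mulVec_nonneg ?_ fun x => ?_
  · refine Matrix.IsHermitian.ext fun i j => ?_
    simp only [hM₀, Matrix.sub_apply, Matrix.smul_apply, Matrix.of_apply, star_trivial,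
      Matrix.one_apply, eq_comm (a := j) (b := i)]
    have e1 : ∀ z, pt t z * g z t j * g z t i = pt t z * g z t i * g z t j := fun z => by ring
    have e2 : ∀ z : EuclideanSpace ℝ (Fin d), z j * z i * p₀ z = z i * z j * p₀ z :=
      fun z => by ring
    simp_rw [e1, e2]
  · have hx := (hdir (WithLp.toLp 2 x)).2
    rw [star_trivial, Matrix.sub_mulVec, Matrix.sub_mulVec, Matrix.smul_mulVec,
      Matrix.smul_mulVec, Matrix.one_mulVec, dotProduct_sub, dotProduct_sub, dotProduct_smul,
      dotProduct_smul, hM, hptn, quadForm_integral hcoord0, quadForm_integral hcoord]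
    have hn : ‖(WithLp.toLp 2 x : EuclideanSpace ℝ (Fin d))‖ ^ 2 = x ⬝ᵥ x := by
      rw [EuclideanSpace.real_norm_sq_eq]
      simp [dotProduct, sq]
    rw [hn, ha2] at hx
    simp only [smul_eq_mul, id]
    linarith
end

section
/- Let T > 1 and 0 < t₀ ≤ 1 with t₀ < T, and define ψ(t) = ((e^T − 1)/(e^T − e^t)) · e^{t/2} for 0 ≤ t < T. Then ∫₀^{t} ψ(s)² ds = (e^T − 1)² · (1/(e^T − e^t) − 1/(e^T − 1)) for every 0 ≤ t < T, and the quantity V = (1 + ∫₀^{T−t₀} ψ(s)² ds) / ψ(T−t₀)² satisfies V ≤ e · t₀. (V is the variance of each coordinate of the time-(T−t₀) solution of the orthogonal backward SDE dY_t = [1/2 − 1/h(T−t)] Y_t dt + dB_t started from Y₀ ∼ N(0, I).) -/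
/-!
Since `ψ(s)² = (e^T - 1)² e^s / (e^T - e^s)²`, the function `(e^T - 1)² / (e^T - e^s)` is an
antiderivative of `ψ²` on `s < T`, which gives the integral. Writing `M = e^T - 1` and
`D = e^T - e^{T-t₀}`, the numerator of `V` is `1 - M + M² / D`, which is at most `M² / D` because
`e^T ≥ 1 + T ≥ 2`. Hence `V ≤ D / e^{T-t₀} = e^{t₀} - 1 ≤ t₀ e^{t₀} ≤ e t₀`.
-/

open Real intervalIntegral

/-- variance of the orthogonal backward process.
With `ψ(t) = ((e^T - 1)/(e^T - e^t)) e^{t/2}`, one has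
`∫₀^t ψ(s)² ds = (e^T - 1)² (1/(e^T - e^t) - 1/(e^T - 1))` for `0 ≤ t < T`, and
`V = (1 + ∫₀^{T-t₀} ψ² )/ψ(T-t₀)² ≤ e t₀` whenever `T > 1` and `0 < t₀ ≤ 1`, `t₀ < T`. -/
theorem orthogonal_process_variance_bound
    (T t₀ : ℝ) (hT : 1 < T) (ht₀ : 0 < t₀) (ht₀1 : t₀ ≤ 1) (ht₀T : t₀ < T)
    (ψ : ℝ → ℝ)
    (hψ : ∀ t, ψ t = (Real.exp T - 1) / (Real.exp T - Real.exp t) * Real.exp (t / 2)) :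
    (∀ t : ℝ, 0 ≤ t → t < T →
      ∫ s in (0:ℝ)..t, ψ s ^ 2 =
        (Real.exp T - 1) ^ 2 *
          (1 / (Real.exp T - Real.exp t) - 1 / (Real.exp T - 1))) ∧
    (1 + ∫ s in (0:ℝ)..(T - t₀), ψ s ^ 2) / ψ (T - t₀) ^ 2 ≤ Real.exp 1 * t₀ := by
  have hsq : ∀ s, ψ s ^ 2 = (Real.exp T - 1) ^ 2 * (Real.exp s / (Real.exp T - Real.exp s) ^ 2) := by
    intro s
    have h : Real.exp (s / 2) ^ 2 = Real.exp s := by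
      rw [← Real.exp_nat_mul]
      congr 1
      push_cast
      ring
    rw [hψ, mul_pow, div_pow, h]
    ring
  have hint : ∀ t : ℝ, 0 ≤ t → t < T →
      ∫ s in (0:ℝ)..t, ψ s ^ 2 =
        (Real.exp T - 1) ^ 2 *
          (1 / (Real.exp T - Real.exp t) - 1 / (Real.exp T - 1)) := by
    intro t ht0 htT
    have hne : ∀ s ∈ Set.uIcc 0 t, Real.exp T - Real.exp s ≠ 0 := by
      intro s hs
      rw [Set.uIcc_of_le ht0] at hs
      exact (sub_pos.2 (Real.exp_lt_exp.2 (hs.2.trans_lt htT))).ne'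
    simp_rw [hsq]
    rw [intervalIntegral.integral_const_mul]
    congr 1
    have hderiv : ∀ s ∈ Set.uIcc 0 t,
        HasDerivAt (fun s => (Real.exp T - Real.exp s)⁻¹)
          (Real.exp s / (Real.exp T - Real.exp s) ^ 2) s := by
      intro s hs
      simpa using ((Real.hasDerivAt_exp s).const_sub (Real.exp T)).fun_inv (hne s hs)
    have hcont : ContinuousOn (fun s => Real.exp s / (Real.exp T - Real.exp s) ^ 2)
        (Set.uIcc 0 t) :=
      ContinuousOn.div (by fun_prop) (by fun_prop) fun s hs => pow_ne_zero 2 (hne s hs)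
    rw [intervalIntegral.integral_eq_sub_of_hasDerivAt hderiv hcont.intervalIntegrable]
    simp
  refine ⟨hint, ?_⟩
  rw [hint (T - t₀) (by linarith) (by linarith), hsq]
  have hM : 1 < Real.exp T - 1 := by linarith [Real.add_one_lt_exp (by linarith : T ≠ 0)]
  have hD : 0 < Real.exp T - Real.exp (T - t₀) := sub_pos.2 (Real.exp_lt_exp.2 (by linarith))
  have ha : 0 < Real.exp (T - t₀) := Real.exp_pos _
  have har : Real.exp T = Real.exp (T - t₀) * Real.exp t₀ := by
    rw [← Real.exp_add]
    congr 1
    ring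
  -- `e^r - 1 ≤ r e^r` is `1 - r ≤ e^{-r}` multiplied by `e^r`
  have hr : Real.exp t₀ - 1 ≤ Real.exp 1 * t₀ := by
    have h1 : Real.exp (-t₀) * Real.exp t₀ = 1 := by rw [← Real.exp_add]; simp
    have h2 : (-t₀ + 1) * Real.exp t₀ ≤ Real.exp (-t₀) * Real.exp t₀ :=
      mul_le_mul_of_nonneg_right (Real.add_one_le_exp _) (Real.exp_pos _).le
    have h3 : Real.exp t₀ * t₀ ≤ Real.exp 1 * t₀ :=
      mul_le_mul_of_nonneg_right (Real.exp_le_exp.2 ht₀1) ht₀.le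
    linarith
  have hDa : Real.exp T - Real.exp (T - t₀) ≤ Real.exp 1 * t₀ * Real.exp (T - t₀) := by
    have h := mul_le_mul_of_nonneg_left hr ha.le
    linarith
  generalize Real.exp (T - t₀) = a at *
  generalize Real.exp T - a = D at *
  generalize Real.exp T - 1 = M at *
  have hM0 : 0 < M := by linarith
  calc (1 + M ^ 2 * (1 / D - 1 / M)) / (M ^ 2 * (a / D ^ 2))
      ≤ (M ^ 2 / D) / (M ^ 2 * (a / D ^ 2)) := by
        have h : 1 + M ^ 2 * (1 / D - 1 / M) = M ^ 2 / D + (1 - M) := by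
          field_simp
          ring
        rw [h]
        gcongr
        linarith
    _ = D / a := by field_simp
    _ ≤ Real.exp 1 * t₀ := (div_le_iff₀ ha).2 hDa
end

section
/- Let T > 1, let η > 0 and t₀ > 0 satisfy t₀ + η ≤ 1, let K be a positive integer with T − t₀ = Kη, and define a(t) = 1/h(T−t) − 1/2 for t ∈ [0, T−t₀]. Assume a(kη)·η ≤ 1 for all 0 ≤ k ≤ K−1. Define the sequence V₀ = 1 and V_{k+1} = (1 − a(kη)·η)² V_k + η for 0 ≤ k ≤ K−1. Then V_K ≤ e · (t₀ + η). (V_K is the per-coordinate variance of the discretized orthogonal backward process at time T − t₀ when started from a standard Gaussian.) -/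
/-!
Write `s = T - kη` for the time remaining at step `k`. The stronger invariant `V_k ≤ s + η` holds
along the whole recursion, and at `k = K`, where `s = t₀`, it reads `V_K ≤ t₀ + η`.

The drift coefficient is `a = (1/2) coth (s/2) ≥ 1/s` (`inv_le_coeff`), so, since `a η ≤ 1`, the
contraction factor satisfies `0 ≤ 1 - a η ≤ (s - η)/s`. The invariant then propagates because
`((s - η)/s)² (s + η) ≤ s - η`, which is `(s - η)(s + η) ≤ s²`.
-/

open Real

/-- A polynomial-exponential form of `tanh (s/2) ≤ s/2`. The right side minus the left side vanishes
at `0` and has derivative `1 - (1 - s) e^s ≥ 0`. -/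
lemma two_sub_mul_exp_le {s : ℝ} (hs : 0 ≤ s) : (2 - s) * Real.exp s ≤ s + 2 := by
  have hd : ∀ x : ℝ, HasDerivAt (fun x : ℝ => x + 2 - (2 - x) * Real.exp x)
      (1 - (1 - x) * Real.exp x) x := by
    intro x
    have h := ((hasDerivAt_id x).add_const 2).sub
      (((hasDerivAt_id x).const_sub 2).mul (Real.hasDerivAt_exp x))
    refine h.congr_deriv ?_
    simp only [id]
    ring
  have hmono : Monotone (fun x : ℝ => x + 2 - (2 - x) * Real.exp x) := by
    refine monotone_of_deriv_nonneg (fun x => (hd x).differentiableAt) fun x => ?_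
    rw [(hd x).deriv]
    have h1 : 1 - x ≤ Real.exp (-x) := Real.one_sub_le_exp_neg x
    have h2 : Real.exp (-x) * Real.exp x = 1 := by rw [← Real.exp_add]; simp
    nlinarith [Real.exp_pos x]
  have h := hmono hs
  simp only [Real.exp_zero] at h
  linarith

/-- The coefficient `1/h(s) - 1/2 = (1/2) coth (s/2)` is at least `1/s`. -/
lemma inv_le_coeff {s : ℝ} (hs : 0 < s) : 1 / s ≤ 1 / hfun s - 1 / 2 := by
  have hh : 0 < hfun s := by
    unfold hfun
    have : Real.exp (-s) < 1 := by simpa using hs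
    linarith
  have h2 : Real.exp (-s) * Real.exp s = 1 := by rw [← Real.exp_add]; simp
  have key : (2 + s) * hfun s ≤ 2 * s := by
    unfold hfun
    have h := mul_le_mul_of_nonneg_left (two_sub_mul_exp_le hs.le) (Real.exp_pos (-s)).le
    nlinarith
  have : 1 / hfun s - 1 / 2 - 1 / s = (2 * s - (2 + s) * hfun s) / (2 * s * hfun s) := by
    field_simp
    ring
  have h3 : 0 ≤ (2 * s - (2 + s) * hfun s) / (2 * s * hfun s) :=
    div_nonneg (by linarith) (by positivity)
  linarith

/-- One step of the recursion preserves the bound `v ≤ s + η`, with `s` replaced by `s - η`. -/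
lemma step_bound {s η b v : ℝ} (hη : 0 < η) (hs : η < s) (hb : 1 / s ≤ b) (hb1 : b * η ≤ 1)
    (hv : v ≤ s + η) : (1 - b * η) ^ 2 * v + η ≤ s := by
  have hs0 : 0 < s := hη.trans hs
  have hle : 1 - b * η ≤ (s - η) / s := by
    have h1 := mul_le_mul_of_nonneg_right hb hη.le
    have h2 : (s - η) / s = 1 - 1 / s * η := by field_simp
    linarith
  have hsq : (1 - b * η) ^ 2 ≤ ((s - η) / s) ^ 2 := pow_le_pow_left₀ (by linarith) hle 2
  have h3 : ((s - η) / s) ^ 2 * (s + η) ≤ s - η := by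
    rw [div_pow, div_mul_eq_mul_div, div_le_iff₀ (by positivity)]
    nlinarith [mul_nonneg (sub_pos.2 hs).le (sq_nonneg η)]
  calc (1 - b * η) ^ 2 * v + η ≤ (1 - b * η) ^ 2 * (s + η) + η := by gcongr
    _ ≤ ((s - η) / s) ^ 2 * (s + η) + η := by gcongr
    _ ≤ s := by linarith

/-- variance of the discretized orthogonal backward process.
With `a(t) = 1/h(T-t) - 1/2`, step size `η`, `T - t₀ = K η`, assuming
`a(kη) η ≤ 1` for all `k < K`, the recursion `V₀ = 1`,
`V_{k+1} = (1 - a(kη)η)² V_k + η` satisfies `V_K ≤ e (t₀ + η)`. -/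
theorem discretized_orthogonal_process_variance_bound
    (T t₀ η : ℝ) (hT : 1 < T) (ht₀ : 0 < t₀) (hη : 0 < η) (hsum : t₀ + η ≤ 1)
    (K : ℕ) (hK : 0 < K) (hKη : T - t₀ = K * η)
    (a : ℝ → ℝ) (ha : ∀ t, a t = 1 / hfun (T - t) - 1 / 2)
    (hstep : ∀ k : ℕ, k < K → a (k * η) * η ≤ 1)
    (V : ℕ → ℝ) (hV0 : V 0 = 1)
    (hVrec : ∀ k : ℕ, k < K → V (k + 1) = (1 - a (k * η) * η) ^ 2 * V k + η) :
    V K ≤ Real.exp 1 * (t₀ + η) := by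
  have inv : ∀ k : ℕ, k ≤ K → V k ≤ T - k * η + η := by
    intro k
    induction k with
    | zero => intro _; rw [hV0]; push_cast; linarith
    | succ k ih =>
      intro hk
      have hs : η < T - k * η := by
        have : ((k + 1 : ℕ) : ℝ) * η ≤ K * η := by gcongr
        push_cast at this
        linarith
      have h := step_bound hη hs (ha (k * η) ▸ inv_le_coeff (hη.trans hs)) (hstep k hk)
        (ih (by omega))
      rw [hVrec k hk]
      push_cast
      linarith
  have hfin := inv K le_rfl
  have he : 1 ≤ Real.exp 1 := Real.one_le_exp zero_le_one
  nlinarith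
end
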